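/- Let G be an infinite, connected, locally finite simple graph, let Γ be a subgroup of Aut(G) acting transitively on the vertex set V, and let 𝒜 be a non-trivial subgroup of Γ acting freely on V (i.e., if α ∈ 𝒜 fixes some vertex then α is the identity). Suppose the quotient graph G/𝒜 is vertex-transitive, and that there exists an integer l ≥ 3 such that G/𝒜 contains a cycle of length l but G contains no cycle of length l. Let σ̄_n(𝒜v) denote the number of n-step SAWs in G/𝒜 from the orbit 𝒜v. If σ_n(v)^{1/n} → μ as n → ∞ for a vertex v of G, then limsup_{n→∞} σ̄_n(𝒜v)^{1/n} < μ. -/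

import Mathlib

open Filter

/-- The number of `n`-step self-avoiding walks in `G` starting at `v`. -/
noncomputable def sawCount {V : Type*} (G : SimpleGraph V) (v : V) (n : ℕ) : ℕ :=
  Nat.card {p : Σ w : V, G.Walk v w // p.2.IsPath ∧ p.2.length = n}

/-- The quotient graph `G/𝒜` of a graph `G` by a group `A` of permutations of its vertices. -/
def quotGraph {V : Type*} (G : SimpleGraph V) (A : Subgroup (Equiv.Perm V)) :
    SimpleGraph (Quotient (MulAction.orbitRel A V)) :=
  SimpleGraph.fromRel (fun x y => ∃ u w : V, G.Adj u w ∧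
    Quotient.mk (MulAction.orbitRel A V) u = x ∧ Quotient.mk (MulAction.orbitRel A V) w = y)

namespace QG
open Classical

variable {X : Type*}

/-- endpoint of the walk `x :: p`. -/
def en (x : X) (p : List X) : X := p.getLastD x

theorem en_append (x : X) (p q : List X) : en x (p ++ q) = en (en x p) q := by
  induction p generalizing x with
  | nil => simp [en]
  | cons a p ih => simp only [en, List.cons_append, List.getLastD_cons] at *; exact ih a

theorem chain_append (R : X → X → Prop) (x : X) (p q : List X) :
    (x :: (p ++ q)).IsChain R ↔ (x :: p).IsChain R ∧ (en x p :: q).IsChain R := by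
  induction p generalizing x with
  | nil => simp [en]
  | cons a p ih =>
    have := ih a
    simp only [en, List.cons_append, List.getLastD_cons, List.isChain_cons_cons] at *
    rw [this]; tauto

/-- repeats only at distance exactly `l`. -/
def LS (l : ℕ) (t : List X) : Prop :=
  ∀ i j (hj : j < t.length) (hi : i < j), t[i] = t[j] → j = i + l

theorem LS_of_nodup {l : ℕ} {t : List X} (h : t.Nodup) : LS l t := by
  intro i j hj hi e
  exact absurd ((List.Nodup.getElem_inj_iff h).1 e) (by omega)

theorem LS_append {l : ℕ} {s t : List X} (hs : LS l s) (ht : LS l t) (hd : List.Disjoint s t) :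
    LS l (s ++ t) := by
  intro i j hj hi e
  simp only [List.length_append] at hj
  rw [List.getElem_append, List.getElem_append] at e
  split_ifs at e with h1 h2 h2
  · exact hs i j h2 hi e
  · exact absurd (e ▸ List.getElem_mem _) (fun hh => hd (List.getElem_mem h1) hh)
  · omega
  · have := ht _ _ _ (by omega) e
    omega

/-- periodic parametrisation of a cycle of length `l`. -/
structure Cyc (H : SimpleGraph X) (l : ℕ) (f : ℕ → X) : Prop where
  per : ∀ i, f (i + l) = f i
  adj : ∀ i, H.Adj (f i) (f (i + 1))
  inj : ∀ i j, i < j → j < i + l → f i ≠ f j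

theorem Cyc.shift {H : SimpleGraph X} {l : ℕ} {f : ℕ → X} (h : Cyc H l f) (s : ℕ) :
    Cyc H l (fun i => f (i + s)) := by
  refine ⟨fun i => ?_, fun i => ?_, fun i j hi hj => ?_⟩
  · have := h.per (i + s); rw [← this]; congr 1; omega
  · have := h.adj (i + s); convert this using 2; omega
  · exact h.inj _ _ (by omega) (by omega)

theorem Cyc.per_mul {H : SimpleGraph X} {l : ℕ} {f : ℕ → X} (h : Cyc H l f) (i n : ℕ) :
    f (i + n * l) = f i := by
  induction n with
  | zero => simp
  | succ n ih => rw [← ih, ← h.per (i + n * l)]; congr 1; ring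

theorem Cyc.mod {H : SimpleGraph X} {l : ℕ} {f : ℕ → X} (h : Cyc H l f) (i : ℕ) :
    f (i % l) = f i := by
  conv_rhs => rw [← Nat.mod_add_div i l, mul_comm]
  rw [h.per_mul]

theorem Cyc.range_shift {H : SimpleGraph X} {l : ℕ} (hl : 0 < l) {f : ℕ → X} (h : Cyc H l f)
    (s : ℕ) : Set.range (fun i => f (i + s)) = Set.range f := by
  ext y; constructor
  · rintro ⟨i, rfl⟩; exact ⟨_, rfl⟩
  · rintro ⟨i, rfl⟩
    refine ⟨i + s * (l - 1), ?_⟩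
    have := h.per_mul i s
    simp only
    rw [← this]; congr 1
    obtain ⟨m, rfl⟩ : ∃ m, l = m + 1 := ⟨l - 1, by omega⟩
    simp; ring

theorem Cyc.mem_range {H : SimpleGraph X} {l : ℕ} (hl : 0 < l) {f : ℕ → X} (h : Cyc H l f)
    {y : X} (hy : y ∈ Set.range f) : ∃ r < l, f r = y := by
  obtain ⟨i, rfl⟩ := hy
  exact ⟨i % l, Nat.mod_lt _ hl, h.mod i⟩

theorem Cyc.map {H : SimpleGraph X} {l : ℕ} {f : ℕ → X} (h : Cyc H l f) (φ : H ≃g H) :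
    Cyc H l (fun i => φ (f i)) :=
  ⟨fun i => by rw [h.per], fun i => φ.map_rel_iff.2 (h.adj i),
    fun i j hi hj e => h.inj i j hi hj (φ.injective e)⟩

/-- number of visits. -/
noncomputable def vis (f : ℕ → X) (t : List X) : ℕ := t.countP (fun y => decide (y ∈ Set.range f))

theorem vis_append (f : ℕ → X) (s t : List X) : vis f (s ++ t) = vis f s + vis f t := by
  simp [vis]

theorem vis_pos {f : ℕ → X} {t : List X} : 0 < vis f t ↔ ∃ y ∈ t, y ∈ Set.range f := by
  simp [vis, List.countP_pos_iff]

/-- loop -/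
def loop (l : ℕ) (f : ℕ → X) (r : ℕ) : List X := (List.range (l + r + 1)).map f

theorem loop_chain {H : SimpleGraph X} {l : ℕ} {f : ℕ → X} (h : Cyc H l f) (r : ℕ) :
    (loop l f r).IsChain H.Adj := by
  rw [loop, List.isChain_map, List.isChain_range]
  intro m _; exact h.adj m

theorem loop_LS {H : SimpleGraph X} {l : ℕ} {f : ℕ → X} (h : Cyc H l f) {r : ℕ} (hr : r < l) :
    LS l (loop l f r) := by
  intro i j hj hi e
  simp [loop] at hj e
  by_contra hne
  rcases lt_or_ge j (i + l) with h1 | h1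
  · exact h.inj i j hi h1 e
  · have : f (j - l) = f j := by rw [← h.per (j - l)]; congr 1; omega
    rcases lt_trichotomy i (j - l) with h2 | h2 | h2
    · exact h.inj i (j - l) h2 (by omega) (e.trans this.symm)
    · omega
    · omega

theorem first_hit (S : Set X) (p : List X) (h : ∃ y ∈ p, y ∈ S) :
    ∃ A y q, p = A ++ y :: q ∧ y ∈ S ∧ ∀ z ∈ A, z ∉ S := by
  induction p with
  | nil => simp at h
  | cons a p ih =>
    by_cases ha : a ∈ S
    · exact ⟨[], a, p, by simp, ha, by simp⟩
    · obtain ⟨A, y, q, rfl, hy, hA⟩ := ih (by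
        obtain ⟨y, hy, hyS⟩ := h
        rcases List.mem_cons.1 hy with rfl | hy
        · exact absurd hyS ha
        · exact ⟨y, hy, hyS⟩)
      exact ⟨a :: A, y, q, by simp, hy, by simpa using ⟨ha, hA⟩⟩

theorem last_hit (S : Set X) (p : List X) (h : ∃ y ∈ p, y ∈ S) :
    ∃ A y q, p = A ++ y :: q ∧ y ∈ S ∧ ∀ z ∈ q, z ∉ S := by
  obtain ⟨A, y, q, e, hy, hA⟩ := first_hit S p.reverse (by simpa using h)
  refine ⟨q.reverse, y, A.reverse, ?_, hy, by simpa using hA⟩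
  have := congrArg List.reverse e
  simpa using this

/-- data for the modification of a piece. -/
structure MD (H : SimpleGraph X) (l k : ℕ) (p : List X) where
  f : ℕ → X
  A : List X
  K : List X
  B : List X
  r : ℕ
  cyc : Cyc H l f
  hk : k + 1 ≤ vis f p
  hp : p = A ++ K ++ B
  hK : K.head? = some (f 0)
  hK' : K.getLast? = some (f r)
  hr : r < l
  hA : ∀ y ∈ A, y ∉ Set.range f
  hB : ∀ y ∈ B, y ∉ Set.range f

def Good (H : SimpleGraph X) (l k : ℕ) (p : List X) : Prop := ∃ f, Cyc H l f ∧ k + 1 ≤ vis f p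

theorem Good.md {H : SimpleGraph X} {l k : ℕ} (hl : 0 < l) {p : List X} (h : Good H l k p) :
    Nonempty (MD H l k p) := by
  obtain ⟨f, hf, hk⟩ := h
  obtain ⟨A, y, q, rfl, hy, hA⟩ := first_hit (Set.range f) p (vis_pos.1 (by omega))
  obtain ⟨C, z, B, e, hz, hB⟩ := last_hit (Set.range f) (y :: q) ⟨y, by simp, hy⟩
  obtain ⟨s, hs⟩ := hy
  have hrange := hf.range_shift hl s
  rw [← hrange] at hz
  obtain ⟨r, hr, hrz⟩ := (hf.shift s).mem_range hl hz
  refine ⟨⟨fun i => f (i + s), A, C ++ [z], B, r, hf.shift s, ?_, ?_, ?_, ?_, hr, ?_, ?_⟩⟩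
  · unfold vis at *; rw [hrange]; exact hk
  · rw [e]; simp
  · have : (C ++ [z] ++ B).head? = some y := by
      rw [List.append_assoc, List.singleton_append, ← e]; rfl
    rw [List.head?_append_of_ne_nil _ (by simp)] at this
    rw [this]; simp [hs]
  · simp [hrz]
  · rw [hrange]; exact hA
  · rw [hrange]; exact hB

section mod
variable (H : SimpleGraph X) (l k : ℕ)

noncomputable def modA (p : List X) : List X :=
  if h : Nonempty (MD H l k p) then h.some.A else []

noncomputable def cy (p : List X) : Set X :=
  if h : Nonempty (MD H l k p) then Set.range h.some.f else ∅

noncomputable def modP (p : List X) : List X :=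
  if h : Nonempty (MD H l k p) then h.some.A ++ loop l h.some.f h.some.r ++ h.some.B else p

variable {H l k}

theorem mod_spec {p : List X} (h : Nonempty (MD H l k p)) :
    ∃ d : MD H l k p, modA H l k p = d.A ∧ cy H l k p = Set.range d.f ∧
      modP H l k p = d.A ++ loop l d.f d.r ++ d.B :=
  ⟨h.some, by simp [modA, h], by simp [cy, h], by simp [modP, h]⟩

theorem loop_ne (f : ℕ → X) (r : ℕ) : loop l f r ≠ [] := by simp [loop]

theorem loop_head (f : ℕ → X) (r : ℕ) : (loop l f r).head? = some (f 0) := by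
  simp [loop, List.range_succ_eq_map]

theorem loop_last (hf : ∀ i, f (i + l) = f i) (r : ℕ) : (loop l f r).getLast? = some (f r) := by
  simp only [loop, List.range_succ, List.map_append, List.map_cons, List.map_nil]
  simp [← hf r, add_comm]

theorem en_eq (x y : X) (p : List X) (h : p.getLast? = some y) : en x p = y := by
  rw [en, List.getLastD_eq_getLast?, h]; rfl

theorem modP_chain {p : List X} (h : Nonempty (MD H l k p)) (x : X)
    (hc : (x :: p).IsChain H.Adj) :
    (x :: modP H l k p).IsChain H.Adj ∧ en x (modP H l k p) = en x p := by
  obtain ⟨d, -, -, e⟩ := mod_spec h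
  rw [e]
  have hp := d.hp
  have e3 : en x p = en x (d.A ++ d.K ++ d.B) := congrArg (en x) hp
  rw [e3]
  rw [hp] at hc
  simp only [chain_append, en_append, List.append_assoc] at hc ⊢
  rw [en_eq _ _ _ (loop_last d.cyc.per d.r)]
  rw [en_eq _ _ _ d.hK'] at hc ⊢
  refine ⟨⟨hc.1, ?_, hc.2.2⟩, rfl⟩
  rw [List.isChain_cons]
  refine ⟨?_, loop_chain d.cyc _⟩
  have := (List.isChain_cons.1 hc.2.1).1
  rw [loop_head]; rw [d.hK] at this
  exact this

theorem modP_len {p : List X} (h : Nonempty (MD H l k p)) :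
    (modP H l k p).length ≤ p.length + 2 * l := by
  obtain ⟨d, -, -, e⟩ := mod_spec h
  have := d.hr
  have e3 := congrArg List.length d.hp
  rw [e]
  simp [loop] at e3 ⊢
  omega

theorem modA_len {p : List X} (h : Nonempty (MD H l k p)) :
    (modA H l k p).length ≤ p.length := by
  obtain ⟨d, e, -, -⟩ := mod_spec h
  have e3 := congrArg List.length d.hp
  rw [e]
  simp at e3
  omega

theorem modP_mem {p : List X} (h : Nonempty (MD H l k p)) {y : X} (hy : y ∈ modP H l k p) :
    y ∈ p ∨ y ∈ cy H l k p := by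
  obtain ⟨d, -, e2, e⟩ := mod_spec h
  rw [e] at hy; rw [e2]
  simp only [List.mem_append] at hy
  rcases hy with (hy | hy) | hy
  · left; rw [d.hp]; simp [hy]
  · right; simp only [loop, List.mem_map] at hy; obtain ⟨i, -, rfl⟩ := hy; exact ⟨i, rfl⟩
  · left; rw [d.hp]; simp [hy]

theorem modP_LS {p : List X} (h : Nonempty (MD H l k p)) (hn : p.Nodup) :
    LS l (modP H l k p) := by
  obtain ⟨d, -, -, e⟩ := mod_spec h
  rw [e]
  have hp := d.hp
  rw [hp] at hn
  have hA : d.A.Nodup := by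
    have := hn.of_append_left; exact this.of_append_left
  have hB : d.B.Nodup := hn.of_append_right
  have hAB : d.A.Disjoint d.B := by
    have := List.disjoint_of_nodup_append hn
    intro y hy hy'; exact this (by simp [hy]) hy'
  refine LS_append (LS_append (LS_of_nodup hA) (loop_LS d.cyc d.hr) ?_) (LS_of_nodup hB) ?_
  · intro y hy hy'
    simp only [loop, List.mem_map] at hy'; obtain ⟨i, -, rfl⟩ := hy'; exact d.hA _ hy ⟨i, rfl⟩
  · intro y hy hy'
    rcases List.mem_append.1 hy with hy | hy
    · exact hAB hy hy'
    · simp only [loop, List.mem_map] at hy; obtain ⟨i, -, rfl⟩ := hy; exact d.hB _ hy' ⟨i, rfl⟩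

theorem modP_rep (hl : 0 < l) {p : List X} (h : Nonempty (MD H l k p)) :
    ∃ y, (modP H l k p)[(modA H l k p).length]? = some y ∧
      (modP H l k p)[(modA H l k p).length + l]? = some y := by
  obtain ⟨d, e1, -, e⟩ := mod_spec h
  rw [e, e1]
  refine ⟨d.f 0, ?_, ?_⟩
  · simp [loop]
  · rw [List.getElem?_append_left (by simp [loop]), List.getElem?_append_right (by omega)]
    have := d.cyc.per 0
    simpa [loop] using this

theorem modP_take {p : List X} (h : Nonempty (MD H l k p)) (hn : p.Nodup) (w : List X) :
    ((modP H l k p ++ w).take ((modA H l k p).length + l)).Nodup := by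
  obtain ⟨d, e1, -, e⟩ := mod_spec h
  rw [e, e1]
  have hp := d.hp
  rw [hp] at hn
  have hA : d.A.Nodup := by
    have := hn.of_append_left; exact this.of_append_left
  have : (d.A ++ loop l d.f d.r ++ d.B ++ w).take (d.A.length + l)
      = d.A ++ (List.range l).map d.f := by
    simp only [List.append_assoc, List.take_length_add_append]
    congr 1
    rw [List.take_append_of_le_length (by simp [loop]; omega), loop, ← List.map_take,
      List.take_range]
    congr 2; omega
  rw [this, List.nodup_append']
  refine ⟨hA, ?_, ?_⟩
  · refine List.Nodup.map_on ?_ List.nodup_range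
    intro i hi j hj hij
    simp only [List.mem_range] at hi hj
    rcases lt_trichotomy i j with h1 | h1 | h1
    · exact absurd hij (d.cyc.inj _ _ h1 (by omega))
    · exact h1
    · exact absurd hij.symm (d.cyc.inj _ _ h1 (by omega))
  · intro y hy hy'
    simp only [List.mem_map] at hy'; obtain ⟨i, -, rfl⟩ := hy'; exact d.hA _ hy ⟨i, rfl⟩

end mod
end QG
namespace QG
open Classical
variable {X : Type*}

section parse
variable (H : SimpleGraph X) (l k : ℕ)

noncomputable def blk (s : List X × Bool) : List X := if s.2 then modP H l k s.1 else s.1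

noncomputable def modw : List (List X × Bool) → List X
  | [] => []
  | s :: ps => blk H l k s ++ modw ps

noncomputable def dat (φ : X → X → X) : X → List (List X × Bool) → List (ℕ × List X)
  | _, [] => []
  | x, s :: ps => if s.2 then ((modA H l k s.1).length, s.1.map (φ x)) :: dat φ (en x s.1) ps
      else dat φ (en x s.1) ps

def U (s : List X × Bool) (y : X) : Prop := y ∈ s.1 ∨ (s.2 = true ∧ y ∈ cy H l k s.1)

structure Valid (M : ℕ) (ps : List (List X × Bool)) : Prop where
  pw : ps.Pairwise (fun s t => ∀ y, U H l k s y → U H l k t y → False)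
  nd : ∀ s ∈ ps, s.1.Nodup
  len : ∀ s ∈ ps, s.1.length = M
  md : ∀ s ∈ ps, s.2 = true → Nonempty (MD H l k s.1)

variable {H l k} {M : ℕ}

theorem Valid.tail {s : List X × Bool} {ps : List (List X × Bool)} (h : Valid H l k M (s :: ps)) :
    Valid H l k M ps :=
  ⟨h.pw.of_cons, fun t ht => h.nd t (by simp [ht]), fun t ht => h.len t (by simp [ht]),
    fun t ht => h.md t (by simp [ht])⟩

theorem blk_U {s : List X × Bool} (hs : s.2 = true → Nonempty (MD H l k s.1)) {y : X}
    (hy : y ∈ blk H l k s) : U H l k s y := by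
  unfold blk at hy
  split_ifs at hy with h
  · rcases modP_mem (hs h) hy with h1 | h1
    · exact Or.inl h1
    · exact Or.inr ⟨h, h1⟩
  · exact Or.inl hy

theorem modw_U {ps : List (List X × Bool)} (h : Valid H l k M ps) {y : X}
    (hy : y ∈ modw H l k ps) : ∃ s ∈ ps, U H l k s y := by
  induction ps with
  | nil => simp [modw] at hy
  | cons s ps ih =>
    rcases List.mem_append.1 hy with hy | hy
    · exact ⟨s, by simp, blk_U (h.md s (by simp)) hy⟩
    · obtain ⟨t, ht, hU⟩ := ih h.tail hy
      exact ⟨t, by simp [ht], hU⟩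

theorem blk_disj {s : List X × Bool} {ps : List (List X × Bool)} (h : Valid H l k M (s :: ps)) :
    (blk H l k s).Disjoint (modw H l k ps) := by
  intro y hy hy'
  obtain ⟨t, ht, hU⟩ := modw_U h.tail hy'
  exact (List.pairwise_cons.1 h.pw).1 t ht y (blk_U (h.md s (by simp)) hy) hU

theorem modw_LS {ps : List (List X × Bool)} (h : Valid H l k M ps) : LS l (modw H l k ps) := by
  induction ps with
  | nil => intro i j hj; simp [modw] at hj
  | cons s ps ih =>
    refine LS_append ?_ (ih h.tail) (blk_disj h)
    unfold blk
    split_ifs with hs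
    · exact modP_LS (h.md s (by simp) hs) (h.nd s (by simp))
    · exact LS_of_nodup (h.nd s (by simp))

theorem modw_chain {ps : List (List X × Bool)} (h : Valid H l k M ps) (x : X)
    (hc : (x :: (ps.map Prod.fst).flatten).IsChain H.Adj) :
    (x :: modw H l k ps).IsChain H.Adj := by
  induction ps generalizing x with
  | nil => simp [modw]
  | cons s ps ih =>
    simp only [List.map_cons, List.flatten_cons, chain_append, modw] at hc ⊢
    have : (x :: blk H l k s).IsChain H.Adj ∧ en x (blk H l k s) = en x s.1 := by
      unfold blk
      split_ifs with hs
      · exact modP_chain (h.md s (by simp) hs) x hc.1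
      · exact ⟨hc.1, rfl⟩
    rw [this.2]
    exact ⟨this.1, ih h.tail _ hc.2⟩

theorem modw_len {ps : List (List X × Bool)} (h : Valid H l k M ps) :
    (modw H l k ps).length ≤ ps.length * M + 2 * l * ps.countP (fun s => s.2) := by
  induction ps with
  | nil => simp [modw]
  | cons s ps ih =>
    have ih := ih h.tail
    have h1 := h.len s (by simp)
    rw [modw, List.length_append, List.countP_cons, List.length_cons, Nat.add_mul, Nat.mul_add]
    have h3 : (blk H l k s).length ≤ M + 2 * l * (if s.2 = true then 1 else 0) := by
      unfold blk
      split_ifs with hs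
      · have := modP_len (h.md s (by simp) hs)
        omega
      · omega
    omega

theorem dat_len (φ : X → X → X) (x : X) (ps : List (List X × Bool)) :
    (dat H l k φ x ps).length = ps.countP (fun s => s.2) := by
  induction ps generalizing x with
  | nil => simp [dat]
  | cons s ps ih =>
    rw [dat, List.countP_cons]
    split_ifs with hs <;> simp [ih]

theorem dat_mem (φ : X → X → X) (x : X) (T : Set (List X)) {ps : List (List X × Bool)}
    (h : Valid H l k M ps)
    (hT : ∀ x p, (x :: p).IsChain H.Adj → p.length = M → p.map (φ x) ∈ T)
    (hc : (x :: (ps.map Prod.fst).flatten).IsChain H.Adj) :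
    ∀ d ∈ dat H l k φ x ps, d.1 ≤ M ∧ d.2 ∈ T := by
  induction ps generalizing x with
  | nil => simp [dat]
  | cons s ps ih =>
    intro d hd
    simp only [List.map_cons, List.flatten_cons, chain_append] at hc
    rw [dat] at hd
    have h1 := h.len s (by simp)
    split_ifs at hd with hs
    · rcases List.mem_cons.1 hd with rfl | hd
      · have := modA_len (h.md s (by simp) hs)
        exact ⟨by simp only; omega, hT _ _ hc.1 h1⟩
      · exact ih _ h.tail hc.2 d hd
    · exact ih _ h.tail hc.2 d hd

theorem dat_take (φ : X → X → X) (x : X) {ps : List (List X × Bool)} (h : Valid H l k M ps)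
    {a : ℕ} {q : List X} {D : List (ℕ × List X)} (hd : dat H l k φ x ps = (a, q) :: D) :
    ((modw H l k ps).take (a + l)).Nodup ∧
    (∀ s ∈ ps.head?, s.2 = false → ((modw H l k ps).take (M + (a + l))).Nodup) := by
  induction ps generalizing x with
  | nil => simp [dat] at hd
  | cons s ps ih =>
    rw [dat] at hd
    split_ifs at hd with hs
    · refine ⟨?_, by simp [hs]⟩
      simp only [List.cons.injEq, Prod.mk.injEq] at hd
      rw [← hd.1.1, modw, blk, if_pos hs]
      exact modP_take (h.md s (by simp) hs) (h.nd s (by simp)) _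
    · have h1 := (ih _ h.tail hd).1
      have h2 : ((modw H l k (s :: ps)).take (M + (a + l))).Nodup := by
        have hb : blk H l k s = s.1 := by simp [blk, hs]
        have hdis := blk_disj h
        rw [modw, hb, ← h.len s (by simp), List.take_length_add_append]
        rw [hb] at hdis
        rw [List.nodup_append']
        exact ⟨h.nd s (by simp), h1, fun y hy hy' => hdis hy (List.mem_of_mem_take hy')⟩
      refine ⟨?_, fun t ht _ => h2⟩
      exact h2.sublist ((List.take_prefix_take_left (by omega)).sublist)

theorem mixed (hl : 0 < l) (hM : 0 < M) (φ : X → X → X) (x : X)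
    {s t : List X × Bool} {ps qs : List (List X × Bool)}
    (h : Valid H l k M (s :: ps)) (h' : Valid H l k M (t :: qs))
    (hw : modw H l k (s :: ps) = modw H l k (t :: qs))
    (hd : dat H l k φ x (s :: ps) = dat H l k φ x (t :: qs))
    (hs : s.2 = true) (ht : t.2 = false) : False := by
  have e : dat H l k φ x (t :: qs) =
    ((modA H l k s.1).length, s.1.map (φ x)) :: dat H l k φ (en x s.1) ps := by
    rw [← hd, dat, if_pos hs]
  have h1 := (dat_take φ x h' e).2 t (by simp) ht
  rw [← hw] at h1
  obtain ⟨y, hy1, hy2⟩ := modP_rep hl (h.md s (by simp) hs)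
  have hb : modw H l k (s :: ps) = modP H l k s.1 ++ modw H l k ps := by
    rw [modw, blk, if_pos hs]
  rw [hb] at h1
  set a := (modA H l k s.1).length
  obtain ⟨g1, e1⟩ := List.getElem?_eq_some_iff.1 hy1
  obtain ⟨g2, e2⟩ := List.getElem?_eq_some_iff.1 hy2
  have i1 : a < ((modP H l k s.1 ++ modw H l k ps).take (M + (a + l))).length := by
    simp only [List.length_take, List.length_append]; omega
  have i2 : a + l < ((modP H l k s.1 ++ modw H l k ps).take (M + (a + l))).length := by
    simp only [List.length_take, List.length_append]; omega
  have := (List.Nodup.getElem_inj_iff h1 (hi := i1) (hj := i2)).1 (by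
    rw [List.getElem_take, List.getElem_take, List.getElem_append_left g1,
      List.getElem_append_left g2, e1, e2])
  omega

theorem parse_inj (hl : 0 < l) (hM : 0 < M) (φ : X → X → X)
    (hφ : ∀ x, Function.Injective (φ x)) (x : X)
    (ps qs : List (List X × Bool)) (hlen : ps.length = qs.length)
    (h : Valid H l k M ps) (h' : Valid H l k M qs)
    (hw : modw H l k ps = modw H l k qs)
    (hd : dat H l k φ x ps = dat H l k φ x qs) : ps = qs := by
  induction ps generalizing x qs with
  | nil => exact (List.length_eq_zero_iff.1 hlen.symm).symm
  | cons s ps ih =>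
    cases qs with
    | nil => simp at hlen
    | cons t qs =>
      have key : s = t := by
        by_cases hs : s.2 = true
        · by_cases ht : t.2 = true
          · rw [dat, dat, if_pos hs, if_pos ht] at hd
            simp only [List.cons.injEq, Prod.mk.injEq] at hd
            exact Prod.ext ((List.map_injective_iff.2 (hφ x)) hd.1.2) (hs.trans ht.symm)
          · exact (mixed hl hM φ x h h' hw hd hs (by simpa using ht)).elim
        · by_cases ht : t.2 = true
          · exact (mixed hl hM φ x h' h hw.symm hd.symm ht (by simpa using hs)).elim
          · rw [modw, modw, blk, blk, if_neg hs, if_neg ht] at hw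
            have := List.append_inj_left hw (by rw [h.len s (by simp), h'.len t (by simp)])
            refine Prod.ext this ?_
            simp only [Bool.not_eq_true] at hs ht
            rw [hs, ht]
      subst key
      congr 1
      refine ih (en x s.1) qs (by simpa using hlen) h.tail h'.tail ?_ ?_
      · rw [modw, modw] at hw; exact List.append_cancel_left hw
      · rw [dat, dat] at hd
        split_ifs at hd with hs
        · exact (List.cons.inj hd).2
        · exact hd

end parse
end QG
namespace QG
open Classical
variable {X : Type*}

theorem sum_le_inj {α β : Type*} (s : Finset α) (t : Finset β) (i : α → β) (a : α → ℝ) (b : β → ℝ)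
    (hi : ∀ x ∈ s, i x ∈ t) (hinj : ∀ x ∈ s, ∀ y ∈ s, i x = i y → x = y)
    (hab : ∀ x ∈ s, a x ≤ b (i x)) (hb : ∀ y ∈ t, 0 ≤ b y) : ∑ x ∈ s, a x ≤ ∑ y ∈ t, b y := by
  calc ∑ x ∈ s, a x ≤ ∑ x ∈ s, b (i x) := Finset.sum_le_sum hab
    _ = ∑ y ∈ s.image i, b y := (Finset.sum_image hinj).symm
    _ ≤ ∑ y ∈ t, b y := Finset.sum_le_sum_of_subset_of_nonneg (Finset.image_subset_iff.2 hi)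
        (fun y hy _ => hb y hy)

/-- lists over a finset -/
noncomputable def lst {α : Type*} (s : Finset α) : ℕ → Finset (List α)
  | 0 => {[]}
  | n + 1 => (s ×ˢ lst s n).image (fun z => z.1 :: z.2)

theorem lst_card {α : Type*} (s : Finset α) (n : ℕ) : (lst s n).card ≤ s.card ^ n := by
  induction n with
  | zero => simp [lst]
  | succ n ih =>
    rw [lst]
    refine Finset.card_image_le.trans ?_
    rw [Finset.card_product, pow_succ, mul_comm]
    exact Nat.mul_le_mul_right _ ih

theorem mem_lst {α : Type*} (s : Finset α) (t : List α) (h : ∀ y ∈ t, y ∈ s) :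
    t ∈ lst s t.length := by
  induction t with
  | nil => simp [lst]
  | cons a t ih =>
    simp only [List.length_cons, lst, Finset.mem_image, Finset.mem_product]
    exact ⟨(a, t), ⟨h a (by simp), ih fun y hy => h y (by simp [hy])⟩, rfl⟩

theorem wfin {H : SimpleGraph X} (hlf : ∀ x, (H.neighborSet x).Finite) (n : ℕ) (x : X) :
    {t : List X | t.length = n ∧ (x :: t).IsChain H.Adj}.Finite := by
  induction n generalizing x with
  | zero =>
    refine (Set.finite_singleton []).subset ?_
    rintro t ⟨ht, -⟩; simpa using ht
  | succ n ih =>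
    have : (⋃ y ∈ H.neighborSet x, (fun t => y :: t) ''
      {t : List X | t.length = n ∧ (y :: t).IsChain H.Adj}).Finite :=
      (hlf x).biUnion fun y _ => (ih y).image _
    refine this.subset ?_
    rintro t ⟨ht, hc⟩
    cases t with
    | nil => simp at ht
    | cons y t =>
      simp only [List.isChain_cons_cons] at hc
      simp only [Set.mem_iUnion, Set.mem_image]
      exact ⟨y, hc.1, t, ⟨by simpa using ht, hc.2⟩, rfl⟩

noncomputable def wl {H : SimpleGraph X} (hlf : ∀ x, (H.neighborSet x).Finite) (n : ℕ) (x : X) :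
    Finset (List X) := (wfin hlf n x).toFinset

theorem mem_wl {H : SimpleGraph X} {hlf : ∀ x, (H.neighborSet x).Finite} {n : ℕ} {x : X}
    {t : List X} : t ∈ wl hlf n x ↔ t.length = n ∧ (x :: t).IsChain H.Adj := by
  simp [wl]

theorem chain_map {H : SimpleGraph X} (φ : H ≃g H) {t : List X} (h : t.IsChain H.Adj) :
    (t.map φ).IsChain H.Adj := by
  rw [List.isChain_map]
  exact h.imp fun a b hab => φ.map_rel_iff.2 hab

def Al (H : SimpleGraph X) (l k : ℕ) (t : List X) : Prop :=
  t.Nodup ∧ ∀ f, Cyc H l f → vis f t ≤ k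

noncomputable def SS {H : SimpleGraph X} (hlf : ∀ x, (H.neighborSet x).Finite) (l k n : ℕ) (x : X) :
    Finset (List X) := (wl hlf n x).filter (Al H l k)

theorem mem_SS {H : SimpleGraph X} {hlf : ∀ x, (H.neighborSet x).Finite} {l k n : ℕ} {x : X}
    {t : List X} : t ∈ SS hlf l k n x ↔ (t.length = n ∧ (x :: t).IsChain H.Adj) ∧ Al H l k t := by
  simp [SS, mem_wl]

theorem vis_map {H : SimpleGraph X} (φ : H ≃g H) (f : ℕ → X) (t : List X) :
    vis f (t.map φ) = vis (fun i => φ.symm (f i)) t := by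
  simp only [vis, List.countP_map]
  refine List.countP_congr fun y _ => ?_
  simp only [Function.comp, decide_eq_true_eq, Set.mem_range]
  refine exists_congr fun i => ?_
  rw [← φ.symm.injective.eq_iff]; simp

theorem Al.map {H : SimpleGraph X} {l k : ℕ} {t : List X} (h : Al H l k t) (φ : H ≃g H) :
    Al H l k (t.map φ) := by
  refine ⟨h.1.map φ.injective, fun f hf => ?_⟩
  rw [vis_map]
  exact h.2 _ (hf.map φ.symm)

theorem SS_card {H : SimpleGraph X} (hlf : ∀ x, (H.neighborSet x).Finite)
    (htr : ∀ x y : X, ∃ φ : H ≃g H, φ x = y) (l k n : ℕ) (x y : X) :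
    (SS hlf l k n x).card ≤ (SS hlf l k n y).card := by
  obtain ⟨φ, rfl⟩ := htr x y
  refine Finset.card_le_card_of_injOn (fun t => t.map φ) ?_ ?_
  · intro t ht
    simp only [Finset.mem_coe, mem_SS] at ht ⊢
    exact ⟨⟨by simpa using ht.1.1, chain_map φ ht.1.2⟩, ht.2.map φ⟩
  · intro t _ t' _ e
    exact List.map_injective_iff.2 φ.injective e

theorem Al.left {H : SimpleGraph X} {l k : ℕ} {s t : List X} (h : Al H l k (s ++ t)) :
    Al H l k s :=
  ⟨h.1.of_append_left, fun f hf => by have := h.2 f hf; rw [vis_append] at this; omega⟩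

theorem Al.right {H : SimpleGraph X} {l k : ℕ} {s t : List X} (h : Al H l k (s ++ t)) :
    Al H l k t :=
  ⟨h.1.of_append_right, fun f hf => by have := h.2 f hf; rw [vis_append] at this; omega⟩

theorem sum_split {H : SimpleGraph X} (hlf : ∀ x, (H.neighborSet x).Finite) (l k m n : ℕ) (x : X)
    (F G : List X → ℝ) (hF : ∀ t, 0 ≤ F t) (hG : ∀ t, 0 ≤ G t) :
    ∑ t ∈ SS hlf l k (m + n) x, F (t.take m) * G (t.drop m) ≤
      ∑ p ∈ SS hlf l k m x, F p * ∑ q ∈ SS hlf l k n (en x p), G q := by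
  simp only [Finset.mul_sum]
  rw [Finset.sum_sigma' (SS hlf l k m x) (fun p => SS hlf l k n (en x p))]
  refine sum_le_inj _ _ (fun t => ⟨t.take m, t.drop m⟩) _ _ ?_ ?_ ?_ ?_
  · intro t ht
    rw [mem_SS] at ht
    obtain ⟨⟨h1, h2⟩, h3⟩ := ht
    rw [← List.take_append_drop m t] at h2 h3
    rw [chain_append] at h2
    simp only [Finset.mem_sigma, mem_SS]
    refine ⟨⟨⟨by simp; omega, h2.1⟩, h3.left⟩, ⟨⟨by simp; omega, h2.2⟩, h3.right⟩⟩
  · intro t _ t' _ e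
    simp only [Sigma.mk.injEq, heq_eq_eq] at e
    rw [← List.take_append_drop m t, e.1, e.2, List.take_append_drop]
  · intro t _; exact le_rfl
  · intro y _; exact mul_nonneg (hF _) (hG _)

theorem SS_sub {H : SimpleGraph X} (hlf : ∀ x, (H.neighborSet x).Finite)
    (htr : ∀ x y : X, ∃ φ : H ≃g H, φ x = y) (l k m n : ℕ) (x : X) :
    (SS hlf l k (m + n) x).card ≤ (SS hlf l k m x).card * (SS hlf l k n x).card := by
  have := sum_split hlf l k m n x (fun _ => 1) (fun _ => 1) (by simp) (by simp)
  simp only [mul_one, Finset.sum_const, nsmul_eq_mul, one_mul] at this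
  have h2 : ∑ p ∈ SS hlf l k m x, ((SS hlf l k n (en x p)).card : ℝ) ≤
      ∑ p ∈ SS hlf l k m x, ((SS hlf l k n x).card : ℝ) :=
    Finset.sum_le_sum fun p _ => by exact_mod_cast SS_card hlf htr l k n _ _
  rw [Finset.sum_const, nsmul_eq_mul] at h2
  exact_mod_cast this.trans h2

/-- pieces -/
def pc (M : ℕ) : ℕ → List X → List (List X)
  | 0, _ => []
  | Q + 1, t => t.take M :: pc M Q (t.drop M)

theorem pc_length (M Q : ℕ) (t : List X) : (pc M Q t).length = Q := by
  induction Q generalizing t with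
  | zero => rfl
  | succ Q ih => simp [pc, ih]

theorem pc_flatten (M Q : ℕ) (t : List X) (h : t.length = Q * M) : (pc M Q t).flatten = t := by
  induction Q generalizing t with
  | zero => simp [pc] at h ⊢; exact h
  | succ Q ih =>
    rw [pc, List.flatten_cons, ih, List.take_append_drop]
    rw [List.length_drop, h, Nat.succ_mul]; omega

theorem pc_len (M Q : ℕ) (t : List X) (h : t.length = Q * M) : ∀ p ∈ pc M Q t, p.length = M := by
  induction Q generalizing t with
  | zero => simp [pc]
  | succ Q ih =>
    intro p hp
    rw [Nat.succ_mul] at h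
    rcases List.mem_cons.1 hp with rfl | hp
    · simp; omega
    · exact ih (t.drop M) (by simp; omega) p hp

theorem weight_sum {H : SimpleGraph X} (hlf : ∀ x, (H.neighborSet x).Finite)
    (htr : ∀ x y : X, ∃ φ : H ≃g H, φ x = y) (l k M Q : ℕ) (x x0 : X) (τ : ℝ) (hτ : 0 ≤ τ) :
    ∑ t ∈ SS hlf l (k + 1) (Q * M) x, τ ^ ((pc M Q t).countP (fun p => decide (Good H l k p))) ≤
      ((SS hlf l k M x0).card + τ * (SS hlf l (k + 1) M x0).card) ^ Q := by
  induction Q generalizing x with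
  | zero =>
    simp only [pc, List.countP_nil, pow_zero, Finset.sum_const, nsmul_eq_mul, mul_one, Nat.zero_mul]
    have : SS hlf l (k + 1) 0 x ⊆ {[]} := by
      intro t ht; rw [mem_SS] at ht; simpa using ht.1.1
    exact_mod_cast Finset.card_le_card this
  | succ Q ih =>
    have e : (Q + 1) * M = M + Q * M := by ring
    rw [e]
    set F : List X → ℝ := fun p => τ ^ (if Good H l k p then 1 else 0) with hFdef
    set G : List X → ℝ := fun t => τ ^ ((pc M Q t).countP (fun p => decide (Good H l k p))) with hG
    have h1 := sum_split hlf l (k + 1) M (Q * M) x F G (fun t => pow_nonneg hτ _)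
      (fun t => pow_nonneg hτ _)
    have h2 : ∀ t, τ ^ ((pc M (Q + 1) t).countP (fun p => decide (Good H l k p)))
        = F (t.take M) * G (t.drop M) := by
      intro t
      simp only [F, G, pc, List.countP_cons, pow_add, decide_eq_true_eq]
      ring
    simp only [h2]
    refine h1.trans ?_
    have hFn : ∀ p, 0 ≤ F p := fun p => pow_nonneg hτ _
    calc ∑ p ∈ SS hlf l (k + 1) M x, F p * ∑ q ∈ SS hlf l (k + 1) (Q * M) (en x p), G q
        ≤ ∑ p ∈ SS hlf l (k + 1) M x, F p *
          ((SS hlf l k M x0).card + τ * (SS hlf l (k + 1) M x0).card) ^ Q :=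
          Finset.sum_le_sum fun p _ => mul_le_mul_of_nonneg_left (ih _) (hFn p)
      _ = (∑ p ∈ SS hlf l (k + 1) M x, F p) *
          ((SS hlf l k M x0).card + τ * (SS hlf l (k + 1) M x0).card) ^ Q := by
          rw [Finset.sum_mul]
      _ ≤ _ := by
          rw [pow_succ, mul_comm]
          refine mul_le_mul_of_nonneg_left ?_ (by positivity)
          rw [← Finset.sum_filter_add_sum_filter_not _ (fun p => ¬ Good H l k p)]
          refine add_le_add ?_ ?_
          · calc ∑ p ∈ (SS hlf l (k + 1) M x).filter (fun p => ¬ Good H l k p), F p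
                ≤ ∑ p ∈ SS hlf l k M x, (1 : ℝ) := by
                  refine sum_le_inj _ _ id _ _ ?_ (by simp) ?_ (by simp)
                  · intro p hp
                    simp only [Finset.mem_filter, mem_SS, id] at hp ⊢
                    refine ⟨hp.1.1, hp.1.2.1, fun f hf => ?_⟩
                    by_contra hh
                    exact hp.2 ⟨f, hf, by omega⟩
                  · intro p hp
                    simp [F, (Finset.mem_filter.1 hp).2]
              _ ≤ _ := by
                simp only [Finset.sum_const, nsmul_eq_mul, mul_one]
                exact_mod_cast SS_card hlf htr l k M _ _
          · calc ∑ p ∈ (SS hlf l (k + 1) M x).filter (fun p => ¬ ¬ Good H l k p), F p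
                ≤ ∑ p ∈ SS hlf l (k + 1) M x, τ := by
                  refine sum_le_inj _ _ id _ _ ?_ (by simp) ?_ (by simp [hτ])
                  · intro p hp
                    exact (Finset.mem_filter.1 hp).1
                  · intro p hp
                    have := not_not.1 (Finset.mem_filter.1 hp).2
                    simp [F, this]
              _ ≤ _ := by
                simp only [Finset.sum_const, nsmul_eq_mul]
                rw [mul_comm]
                refine mul_le_mul_of_nonneg_left ?_ hτ
                exact_mod_cast SS_card hlf htr l (k + 1) M _ _

end QG
namespace QG
open Classical
variable {X : Type*}

def nb (H : SimpleGraph X) (l : ℕ) (z : X) : Set X :=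
  {y | ∃ f, Cyc H l f ∧ z ∈ Set.range f ∧ y ∈ Set.range f}

def nb2 (H : SimpleGraph X) (l : ℕ) (z : X) : Set X := ⋃ u ∈ nb H l z, nb H l u

theorem nb_fin {H : SimpleGraph X} (hlf : ∀ x, (H.neighborSet x).Finite) {l : ℕ} (hl : 0 < l)
    (z : X) : (nb H l z).Finite := by
  have : (⋃ r ∈ Set.Iio l, (fun t => en z t) '' (wl hlf r z : Set (List X))).Finite :=
    (Set.finite_Iio l).biUnion fun r _ => (Finset.finite_toSet _).image _
  refine this.subset ?_
  rintro y ⟨f, hf, ⟨s, rfl⟩, hy⟩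
  rw [← hf.range_shift hl s] at hy
  obtain ⟨r, hr, rfl⟩ := (hf.shift s).mem_range hl hy
  simp only [Set.mem_iUnion, Set.mem_image]
  have hc : ((List.range (r + 1)).map (fun i => f (i + s))).IsChain H.Adj := by
    rw [List.isChain_map, List.isChain_range]
    intro m _
    exact (hf.shift s).adj m
  refine ⟨r, hr, (List.range r).map (fun i => f (i + 1 + s)), ?_, ?_⟩
  · rw [Finset.mem_coe, mem_wl]
    refine ⟨by simp, ?_⟩
    rw [List.range_succ_eq_map, List.map_cons, List.map_map] at hc
    simpa [Function.comp_def] using hc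
  · cases r with
    | zero => simp [en]
    | succ r =>
      rw [List.range_succ, List.map_append, en_append]
      simp [en]

theorem nb2_fin {H : SimpleGraph X} (hlf : ∀ x, (H.neighborSet x).Finite) {l : ℕ} (hl : 0 < l)
    (z : X) : (nb2 H l z).Finite :=
  (nb_fin hlf hl z).biUnion fun u _ => nb_fin hlf hl u

theorem nb_map {H : SimpleGraph X} {l : ℕ} (φ : H ≃g H) {z y : X} (h : y ∈ nb H l z) :
    φ y ∈ nb H l (φ z) := by
  obtain ⟨f, hf, ⟨i, rfl⟩, ⟨j, rfl⟩⟩ := h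
  exact ⟨_, hf.map φ, ⟨i, rfl⟩, ⟨j, rfl⟩⟩

theorem nb2_map {H : SimpleGraph X} {l : ℕ} (φ : H ≃g H) {z y : X} (h : y ∈ nb2 H l z) :
    φ y ∈ nb2 H l (φ z) := by
  simp only [nb2, Set.mem_iUnion] at h ⊢
  obtain ⟨u, hu, hy⟩ := h
  exact ⟨φ u, nb_map φ hu, nb_map φ hy⟩

theorem nb2_card {H : SimpleGraph X} (hlf : ∀ x, (H.neighborSet x).Finite) {l : ℕ} (hl : 0 < l)
    (htr : ∀ x y : X, ∃ φ : H ≃g H, φ x = y) (x y : X) :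
    (nb2_fin hlf hl x).toFinset.card ≤ (nb2_fin hlf hl y).toFinset.card := by
  obtain ⟨φ, rfl⟩ := htr x y
  refine Finset.card_le_card_of_injOn φ ?_ φ.injective.injOn
  intro t ht
  simp only [Set.Finite.coe_toFinset] at ht ⊢
  exact nb2_map φ ht

theorem good_cy {H : SimpleGraph X} {l k : ℕ} (hl : 0 < l) {p : List X} (h : Good H l k p) :
    ∃ f, Cyc H l f ∧ cy H l k p = Set.range f ∧ k + 1 ≤ vis f p := by
  obtain ⟨d, -, e, -⟩ := mod_spec (h.md hl)
  exact ⟨d.f, d.cyc, e, d.hk⟩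

theorem pc_nodup {M Q : ℕ} (hM : 0 < M) {t : List X} (h : t.length = Q * M) (hn : t.Nodup) :
    (pc M Q t).Nodup := by
  have hn' := hn
  rw [← pc_flatten M Q t h, List.nodup_flatten] at hn'
  refine List.Pairwise.imp_of_mem ?_ hn'.2
  rintro p q hp hq hd rfl
  have := pc_len M Q t h p hp
  obtain ⟨y, hy⟩ := List.exists_mem_of_length_pos (by omega : 0 < p.length)
  exact hd hy hy

theorem pc_disj {M Q : ℕ} {t : List X} (h : t.length = Q * M) (hn : t.Nodup)
    {p q : List X} (hp : p ∈ pc M Q t) (hq : q ∈ pc M Q t) (hne : p ≠ q) : p.Disjoint q := by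
  rw [← pc_flatten M Q t h, List.nodup_flatten] at hn
  have : Std.Symm (List.Disjoint (α := X)) := ⟨fun _ _ h => h.symm⟩
  exact hn.2.forall hp hq hne

theorem indep {H : SimpleGraph X} (hlf : ∀ x, (H.neighborSet x).Finite) {l : ℕ} (hl : 0 < l)
    (htr : ∀ x y : X, ∃ φ : H ≃g H, φ x = y) (k M Q : ℕ) (hM : 0 < M) (x0 : X)
    (t : List X) (hlen : t.length = Q * M) (hn : t.Nodup) :
    ∃ I : Finset (List X), (∀ p ∈ I, p ∈ pc M Q t ∧ Good H l k p) ∧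
      (∀ p ∈ I, ∀ q ∈ I, p ≠ q → Disjoint (cy H l k p) (cy H l k q)) ∧
      (pc M Q t).countP (fun p => decide (Good H l k p)) ≤
        I.card * (nb2_fin hlf hl x0).toFinset.card := by
  set Gd : Finset (List X) := (pc M Q t).toFinset.filter (Good H l k) with hGd
  have hGm : ∀ p, p ∈ Gd ↔ p ∈ pc M Q t ∧ Good H l k p := by simp [hGd]
  set P : Finset (Finset (List X)) := Gd.powerset.filter
    (fun I => ∀ p ∈ I, ∀ q ∈ I, p ≠ q → Disjoint (cy H l k p) (cy H l k q)) with hP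
  obtain ⟨I, hI⟩ := Finset.exists_maximal (s := P) ⟨∅, by simp [hP]⟩
  have hI1 := hI.prop
  simp only [hP, Finset.mem_filter, Finset.mem_powerset] at hI1
  refine ⟨I, fun p hp => (hGm p).1 (hI1.1 hp), hI1.2, ?_⟩
  have hcard : (pc M Q t).countP (fun p => decide (Good H l k p)) = Gd.card := by
    rw [List.countP_eq_length_filter, ← List.toFinset_card_of_nodup ((pc_nodup hM hlen hn).filter _)]
    congr 1
    ext p; simp [hGd]
  rw [hcard]
  set conf : List X → Finset (List X) := fun p =>
    Gd.filter (fun q => ¬ Disjoint (cy H l k p) (cy H l k q)) with hconf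
  have hcover : Gd ⊆ I.biUnion conf := by
    intro q hq
    rw [Finset.mem_biUnion]
    by_contra hcon
    push Not at hcon
    have hdis : ∀ p ∈ I, Disjoint (cy H l k p) (cy H l k q) := by
      intro p hp
      have := hcon p hp
      simp only [hconf, Finset.mem_filter, not_and, not_not] at this
      exact this hq
    have hq2 : insert q I ∈ P := by
      simp only [hP, Finset.mem_filter, Finset.mem_powerset]
      refine ⟨Finset.insert_subset hq hI1.1, ?_⟩
      intro p hp p' hp' hne
      rcases Finset.mem_insert.1 hp with h1 | h1
      · rcases Finset.mem_insert.1 hp' with h2 | h2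
        · exact absurd (h1.trans h2.symm) hne
        · rw [h1]; exact (hdis _ h2).symm
      · rcases Finset.mem_insert.1 hp' with h2 | h2
        · rw [h2]; exact hdis _ h1
        · exact hI1.2 _ h1 _ h2 hne
    have hqI : q ∈ I := hI.le_of_ge hq2 (Finset.subset_insert _ _) (Finset.mem_insert_self _ _)
    have := hdis q hqI
    obtain ⟨f, -, e, -⟩ := good_cy hl ((hGm q).1 hq).2
    rw [e, disjoint_self] at this
    exact (Set.range_nonempty f).ne_empty this
  refine (Finset.card_le_card hcover).trans (Finset.card_biUnion_le_card_mul _ _ _ ?_)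
  intro p hp
  obtain ⟨f, hf, e, -⟩ := good_cy hl ((hGm p).1 (hI1.1 hp)).2
  refine le_trans ?_ (nb2_card hlf hl htr (f 0) x0)
  have hch : ∀ q, ∃ y, q ∈ Gd → y ∈ q ∧ y ∈ cy H l k q := by
    intro q
    by_cases hq : q ∈ Gd
    · obtain ⟨g, -, eg, hv⟩ := good_cy hl ((hGm q).1 hq).2
      obtain ⟨y, hy1, hy2⟩ := vis_pos.1 (by omega : 0 < vis g q)
      exact ⟨y, fun _ => ⟨hy1, eg ▸ hy2⟩⟩
    · exact ⟨f 0, fun h => absurd h hq⟩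
  choose Y hY using hch
  refine Finset.card_le_card_of_injOn Y ?_ ?_
  · intro q hq
    simp only [hconf, Finset.coe_filter, Set.mem_ofPred_eq] at hq
    obtain ⟨g, hg, eg, hv⟩ := good_cy hl ((hGm q).1 hq.1).2
    obtain ⟨u, hu1, hu2⟩ := Set.not_disjoint_iff.1 hq.2
    simp only [Set.Finite.coe_toFinset, nb2, Set.mem_iUnion]
    exact ⟨u, ⟨f, hf, ⟨0, rfl⟩, e ▸ hu1⟩, ⟨g, hg, eg ▸ hu2, eg ▸ (hY q hq.1).2⟩⟩
  · intro q hq q' hq' hqq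
    simp only [hconf, Finset.coe_filter, Set.mem_ofPred_eq] at hq hq'
    by_contra hne
    refine pc_disj hlen hn ((hGm q).1 hq.1).1 ((hGm q').1 hq'.1).1 hne (hY q hq.1).1 ?_
    rw [hqq]; exact (hY q' hq'.1).1

/-- flagged pieces -/
noncomputable def fl (M Q : ℕ) (t : List X) (S : Finset (List X)) : List (List X × Bool) :=
  (pc M Q t).map (fun p => (p, decide (p ∈ S)))

theorem fl_fst (M Q : ℕ) (t : List X) (S : Finset (List X)) :
    (fl M Q t S).map Prod.fst = pc M Q t := by
  simp [fl, Function.comp_def]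

theorem fl_count {M Q : ℕ} (hM : 0 < M) {t : List X} (hlen : t.length = Q * M) (hn : t.Nodup)
    {S : Finset (List X)} (hS : ∀ p ∈ S, p ∈ pc M Q t) :
    (fl M Q t S).countP (fun s => s.2) = S.card := by
  rw [fl, List.countP_map, List.countP_eq_length_filter,
    ← List.toFinset_card_of_nodup ((pc_nodup hM hlen hn).filter _)]
  congr 1
  ext p
  simp only [List.toFinset_filter, Function.comp, Finset.mem_filter, List.mem_toFinset,
    decide_eq_true_eq]
  exact ⟨fun h => h.2, fun h => ⟨hS p h, h⟩⟩

theorem fl_inj {M Q : ℕ} {t t' : List X} (hlen : t.length = Q * M) (hlen' : t'.length = Q * M)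
    {S S' : Finset (List X)} (hS : ∀ p ∈ S, p ∈ pc M Q t) (hS' : ∀ p ∈ S', p ∈ pc M Q t')
    (h : fl M Q t S = fl M Q t' S') : t = t' ∧ S = S' := by
  have h1 := congrArg (List.map Prod.fst) h
  rw [fl_fst, fl_fst] at h1
  have h2 := congrArg List.flatten h1
  rw [pc_flatten M Q t hlen, pc_flatten M Q t' hlen'] at h2
  refine ⟨h2, ?_⟩
  subst h2
  have key : ∀ p ∈ pc M Q t, (p ∈ S ↔ p ∈ S') := by
    intro p hp
    have := List.map_inj_left.1 h p hp
    simpa using this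
  ext p
  exact ⟨fun hp => (key p (hS p hp)).1 hp, fun hp => (key p (hS' p hp)).2 hp⟩

theorem fl_valid {H : SimpleGraph X} {l : ℕ} (hl : 0 < l) {k M Q : ℕ} 
    {t : List X} (hlen : t.length = Q * M) (ht : Al H l (k + 1) t)
    {S : Finset (List X)} (hS : ∀ p ∈ S, p ∈ pc M Q t ∧ Good H l k p)
    (hd : ∀ p ∈ S, ∀ q ∈ S, p ≠ q → Disjoint (cy H l k p) (cy H l k q)) (hM : 0 < M) :
    Valid H l k M (fl M Q t S) := by
  have hn := ht.1
  have hnf := hn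
  rw [← pc_flatten M Q t hlen, List.nodup_flatten] at hnf
  have hcount : ∀ p q, ([p, q].Sublist (pc M Q t) ∨ [q, p].Sublist (pc M Q t)) →
      p ∈ S → ∀ y ∈ q, y ∉ cy H l k p := by
    intro p q hpq hp y hy hyc
    obtain ⟨f, hf, e, hv⟩ := good_cy hl (hS p hp).2
    have h1 := ht.2 f hf
    have h3 : vis f p + vis f q ≤ vis f t := by
      rw [← pc_flatten M Q t hlen]
      rcases hpq with hpq | hpq
      · have := hpq.flatten.countP_le (p := fun y => decide (y ∈ Set.range f))
        simpa [vis] using this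
      · have := hpq.flatten.countP_le (p := fun y => decide (y ∈ Set.range f))
        simpa [vis, add_comm] using this
    have h4 : 0 < vis f q := vis_pos.2 ⟨y, hy, e ▸ hyc⟩
    omega
  refine ⟨?_, ?_, ?_, ?_⟩
  · rw [fl, List.pairwise_map, List.pairwise_iff_forall_sublist]
    intro p q hpq y hy1 hy2
    have hpm : p ∈ pc M Q t := hpq.subset (by simp)
    have hqm : q ∈ pc M Q t := hpq.subset (by simp)
    have hne : p ≠ q := by
      have := (pc_nodup hM hlen hn).sublist hpq
      simpa using this
    simp only [U, decide_eq_true_eq] at hy1 hy2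
    rcases hy1 with hy1 | ⟨hp, hy1⟩
    · rcases hy2 with hy2 | ⟨hq, hy2⟩
      · exact pc_disj hlen hn hpm hqm hne hy1 hy2
      · exact hcount q p (Or.inr hpq) hq y hy1 hy2
    · rcases hy2 with hy2 | ⟨hq, hy2⟩
      · exact hcount p q (Or.inl hpq) hp y hy2 hy1
      · exact Set.disjoint_left.1 (hd p hp q hq hne) hy1 hy2
  · intro s hs
    obtain ⟨p, hp, rfl⟩ := List.mem_map.1 hs
    exact hnf.1 p hp
  · intro s hs
    obtain ⟨p, hp, rfl⟩ := List.mem_map.1 hs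
    exact pc_len M Q t hlen p hp
  · intro s hs h2
    obtain ⟨p, hp, rfl⟩ := List.mem_map.1 hs
    exact (hS p (by simpa using h2)).2.md hl

end QG
namespace QG
open Classical
variable {X : Type*}

noncomputable def Lc {H : SimpleGraph X} (hlf : ∀ x, (H.neighborSet x).Finite) (l n : ℕ) (x : X) :
    Finset (List X) := (wl hlf n x).filter (LS l)

noncomputable def KK {H : SimpleGraph X} (hlf : ∀ x, (H.neighborSet x).Finite) (M : ℕ) (x0 : X) : ℝ :=
  (((Finset.range (M + 1)) ×ˢ wl hlf M x0).card : ℝ)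

theorem main_ineq {H : SimpleGraph X} (hlf : ∀ x, (H.neighborSet x).Finite) {l : ℕ} (hl : 0 < l)
    (htr : ∀ x y : X, ∃ φ : H ≃g H, φ x = y) (k M Q : ℕ) (hM : 0 < M) (x x0 : X)
    (ξ : ℝ) (hξ : 0 < ξ) (hξ1 : ξ ≤ 1) (I : List X → Finset (List X))
    (hI : ∀ t ∈ SS hlf l (k + 1) (Q * M) x, (∀ p ∈ I t, p ∈ pc M Q t ∧ Good H l k p) ∧
      (∀ p ∈ I t, ∀ q ∈ I t, p ≠ q → Disjoint (cy H l k p) (cy H l k q))) :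
    ∑ t ∈ SS hlf l (k + 1) (Q * M) x,
      ξ ^ (Q * M) * (1 + ξ ^ (2 * l) * (2 * KK hlf M x0)⁻¹) ^ (I t).card ≤
    2 * ∑ n ∈ Finset.range (Q * (M + 2 * l) + 1), ((Lc hlf l n x).card : ℝ) * ξ ^ n := by
  choose Φ hΦ using fun y => htr y x0
  set φ : X → X → X := fun y z => Φ y z with hφ
  set A : Finset (ℕ × List X) := (Finset.range (M + 1)) ×ˢ wl hlf M x0 with hA
  set K : ℝ := KK hlf M x0 with hK
  have hKA : K = (A.card : ℝ) := rfl
  have hK0 : 0 ≤ K := by rw [hKA]; positivity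
  set θ : ℝ := ξ ^ (2 * l) * (2 * K)⁻¹ with hθ
  have e1 : ∀ t ∈ SS hlf l (k + 1) (Q * M) x, ξ ^ (Q * M) * (1 + θ) ^ (I t).card =
      ∑ S ∈ (I t).powerset, ξ ^ (Q * M) * θ ^ S.card := by
    intro t _
    rw [← Finset.mul_sum, add_comm, ← Finset.sum_pow_mul_eq_add_pow θ 1]
    simp
  rw [Finset.sum_congr rfl e1, Finset.sum_sigma' (SS hlf l (k + 1) (Q * M) x) (fun t => (I t).powerset)]
  have e2 : ∑ n ∈ Finset.range (Q * (M + 2 * l) + 1), ((Lc hlf l n x).card : ℝ) * ξ ^ n =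
      ∑ z ∈ (Finset.range (Q * (M + 2 * l) + 1)).sigma (fun n => Lc hlf l n x), ξ ^ z.1 := by
    rw [Finset.sum_sigma]
    simp
  have e3 : ∑ z ∈ (Finset.range (Q + 1)).sigma (fun n => lst A n), ((2 * K)⁻¹) ^ z.1 ≤ 2 := by
    rw [Finset.sum_sigma]
    simp only [Finset.sum_const, nsmul_eq_mul]
    calc ∑ h ∈ Finset.range (Q + 1), ((lst A h).card : ℝ) * ((2 * K)⁻¹) ^ h
        ≤ ∑ h ∈ Finset.range (Q + 1), ((1 : ℝ) / 2) ^ h := by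
          refine Finset.sum_le_sum fun h _ => ?_
          have h1 : ((lst A h).card : ℝ) ≤ K ^ h := by rw [hKA]; exact_mod_cast lst_card A h
          have h2 : K * (2 * K)⁻¹ ≤ 1 / 2 := by
            rcases hK0.eq_or_lt with h0 | h0
            · rw [← h0]; norm_num
            · rw [mul_inv]; field_simp; rfl
          calc ((lst A h).card : ℝ) * ((2 * K)⁻¹) ^ h ≤ K ^ h * ((2 * K)⁻¹) ^ h :=
                mul_le_mul_of_nonneg_right h1 (by positivity)
            _ = (K * (2 * K)⁻¹) ^ h := by rw [mul_pow]
            _ ≤ _ := pow_le_pow_left₀ (by positivity) h2 h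
      _ ≤ 2 := sum_geometric_two_le _
  have e4 : ∑ z ∈ (SS hlf l (k + 1) (Q * M) x).sigma (fun t => (I t).powerset),
      ξ ^ (Q * M) * θ ^ z.2.card ≤
      ∑ w ∈ ((Finset.range (Q + 1)).sigma (fun n => lst A n)) ×ˢ
        ((Finset.range (Q * (M + 2 * l) + 1)).sigma (fun n => Lc hlf l n x)),
        ((2 * K)⁻¹) ^ w.1.1 * ξ ^ w.2.1 := by
    have hval : ∀ z ∈ (SS hlf l (k + 1) (Q * M) x).sigma (fun t => (I t).powerset),
        (z.1.length = Q * M ∧ z.1.Nodup) ∧ (∀ p ∈ z.2, p ∈ pc M Q z.1) ∧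
        Valid H l k M (fl M Q z.1 z.2) ∧
        (x :: ((fl M Q z.1 z.2).map Prod.fst).flatten).IsChain H.Adj := by
      rintro ⟨t, S⟩ hz
      simp only [Finset.mem_sigma, Finset.mem_powerset] at hz
      obtain ⟨ht, hS⟩ := hz
      obtain ⟨h1, h2⟩ := hI t ht
      rw [mem_SS] at ht
      have hS1 : ∀ p ∈ S, p ∈ pc M Q t ∧ Good H l k p := fun p hp => h1 p (hS hp)
      refine ⟨⟨ht.1.1, ht.2.1⟩, fun p hp => (hS1 p hp).1, ?_, ?_⟩
      · exact fl_valid hl ht.1.1 ht.2 hS1 (fun p hp q hq => h2 p (hS hp) q (hS hq)) hM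
      · rw [fl_fst, pc_flatten M Q t ht.1.1]; exact ht.1.2
    have hfl : ∀ (t : List X) (S : Finset (List X)), (fl M Q t S).length = Q := by
      intro t S; simp [fl, pc_length]
    refine sum_le_inj _ _ (fun z => (⟨(dat H l k φ x (fl M Q z.1 z.2)).length,
      dat H l k φ x (fl M Q z.1 z.2)⟩, ⟨(modw H l k (fl M Q z.1 z.2)).length,
      modw H l k (fl M Q z.1 z.2)⟩)) _ _ ?_ ?_ ?_ ?_
    · intro z hz
      obtain ⟨⟨h1, h2⟩, h3, h4, h5⟩ := hval z hz
      have hcl : (fl M Q z.1 z.2).countP (fun s => s.2) ≤ Q :=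
        (List.countP_le_length).trans (hfl _ _).le
      have hml := modw_len h4
      rw [hfl] at hml
      simp only [Finset.mem_product, Finset.mem_sigma, Finset.mem_range]
      refine ⟨⟨by rw [dat_len]; omega, ?_⟩, ?_, ?_⟩
      · refine mem_lst _ _ fun d hd => ?_
        have := dat_mem φ x (wl hlf M x0 : Set (List X)) h4 ?_ h5 d hd
        · rw [hA, Finset.mem_product, Finset.mem_range]
          exact ⟨by omega, this.2⟩
        · intro y p hc hp
          rw [Finset.mem_coe, mem_wl]
          refine ⟨by simpa using hp, ?_⟩
          have := chain_map (Φ y) hc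
          rw [List.map_cons, hΦ] at this
          exact this
      · have : 2 * l * (fl M Q z.1 z.2).countP (fun s => s.2) ≤ 2 * l * Q :=
          Nat.mul_le_mul_left _ hcl
        have e : Q * (M + 2 * l) = Q * M + 2 * l * Q := by ring
        omega
      · rw [Lc, Finset.mem_filter, mem_wl]
        exact ⟨⟨rfl, modw_chain h4 x h5⟩, modw_LS h4⟩
    · intro z hz w hw e
      obtain ⟨⟨h1, h2⟩, h3, h4, h5⟩ := hval z hz
      obtain ⟨⟨h1', h2'⟩, h3', h4', h5'⟩ := hval w hw
      have ea := congrArg (fun u => u.1.2) e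
      have eb := congrArg (fun u => u.2.2) e
      simp only at ea eb
      have := parse_inj hl hM φ (fun y => (Φ y).injective) x _ _ ((hfl _ _).trans (hfl _ _).symm)
        h4 h4' eb ea
      obtain ⟨r1, r2⟩ := fl_inj h1 h1' h3 h3' this
      cases z; cases w; simp only at r1 r2; subst r1; subst r2; rfl
    · intro z hz
      obtain ⟨⟨h1, h2⟩, h3, h4, h5⟩ := hval z hz
      have hml := modw_len h4
      rw [hfl, fl_count hM h1 h2 h3] at hml
      simp only [dat_len, fl_count hM h1 h2 h3]
      rw [hθ, mul_pow, ← pow_mul]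
      have : ξ ^ (Q * M + 2 * l * z.2.card) ≤ ξ ^ (modw H l k (fl M Q z.1 z.2)).length :=
        pow_le_pow_of_le_one hξ.le hξ1 hml
      rw [pow_add] at this
      calc _ = (2 * K)⁻¹ ^ z.2.card * (ξ ^ (Q * M) * ξ ^ (2 * l * z.2.card)) := by ring
        _ ≤ _ := mul_le_mul_of_nonneg_left this (by positivity)
    · intro w _; positivity
  refine e4.trans ?_
  rw [Finset.sum_product, e2]
  simp only [← Finset.mul_sum]
  rw [← Finset.sum_mul]
  exact mul_le_mul_of_nonneg_right e3 (Finset.sum_nonneg fun _ _ => by positivity)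

end QG
namespace QG
open Classical
variable {X : Type*}

theorem exists_root (a : ℝ) (ha : 0 < a) (n : ℕ) : ∃ r : ℝ, 0 < r ∧ r ^ (n + 1) = a :=
  ⟨a ^ (((n + 1 : ℕ) : ℝ)⁻¹), Real.rpow_pos_of_pos ha _,
    Real.rpow_inv_natCast_pow ha.le (Nat.succ_ne_zero n)⟩

theorem contra {H : SimpleGraph X} (hlf : ∀ x, (H.neighborSet x).Finite) {l : ℕ} (hl : 0 < l)
    (htr : ∀ x y : X, ∃ φ : H ≃g H, φ x = y) (k M : ℕ) (hM : 0 < M) (x : X) (μ : ℝ) (hμ : 1 ≤ μ)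
    (hb : ((SS hlf l k M x).card : ℝ) < μ ^ M)
    (hP : ∀ m, 1 ≤ m → μ ^ m ≤ ((SS hlf l (k + 1) m x).card : ℝ))
    (hL : ∀ ξ : ℝ, 0 < ξ → ξ < 1 / μ → ∃ C : ℝ, ∀ N : ℕ,
      ∑ n ∈ Finset.range N, ((Lc hlf l n x).card : ℝ) * ξ ^ n ≤ C) : False := by
  have hμ0 : 0 < μ := by linarith
  set b : ℝ := ((SS hlf l k M x).card : ℝ) with hbdef
  set s : ℝ := ((SS hlf l (k + 1) M x).card : ℝ) with hsdef
  have hb0 : 0 ≤ b := by positivity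
  have hs0 : 0 ≤ s := by positivity
  have hμM : 0 < μ ^ M := by positivity
  obtain ⟨u, hu0, hu1, hub⟩ : ∃ u : ℝ, 0 < u ∧ u < 1 ∧ b < u ^ 2 * μ ^ M := by
    have hr : b / μ ^ M < 1 := (div_lt_one hμM).2 hb
    have hr0 : 0 ≤ b / μ ^ M := by positivity
    refine ⟨(1 + b / μ ^ M) / 2, by positivity, by linarith, ?_⟩
    rw [← div_lt_iff₀ hμM]
    nlinarith
  obtain ⟨e, he⟩ : ∃ e : ℕ, b + u ^ e * s ≤ u ^ 2 * μ ^ M := by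
    have hδ : 0 < (u ^ 2 * μ ^ M - b) / (s + 1) := div_pos (by linarith) (by linarith)
    obtain ⟨e, he⟩ := exists_pow_lt_of_lt_one hδ hu1
    refine ⟨e, ?_⟩
    rw [lt_div_iff₀ (by linarith)] at he
    have : 0 < u ^ e := by positivity
    nlinarith
  set β := (nb2_fin hlf hl x).toFinset.card with hβ
  have hK : 0 < KK hlf M x := by
    have h1 : 0 < s := hμM.trans_le (hP M hM)
    rw [hsdef, Nat.cast_pos, Finset.card_pos] at h1
    obtain ⟨t, ht⟩ := h1
    rw [KK, Nat.cast_pos, Finset.card_pos]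
    exact ⟨(0, t), Finset.mem_product.2 ⟨by simp, (Finset.mem_filter.1 ht).1⟩⟩
  set θ0 : ℝ := (1 / (2 * μ)) ^ (2 * l) * (2 * KK hlf M x)⁻¹ with hθ0
  have hθ0p : 0 < θ0 := by positivity
  obtain ⟨τ, hτ0, hτ⟩ := exists_root (1 + θ0) (by linarith) (e * β)
  have hτ1 : 1 < τ := by
    by_contra h
    have := pow_le_one₀ (n := e * β + 1) hτ0.le (not_lt.1 h)
    linarith
  have hτn : τ ^ (e * β) ≤ 1 + θ0 := by
    rw [← hτ]; exact pow_le_pow_right₀ hτ1.le (Nat.le_succ _)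
  obtain ⟨ρ0, hρ00, hρ0⟩ := exists_root τ⁻¹ (by positivity) M
  have hρ01 : ρ0 < 1 := by
    by_contra h
    have := one_le_pow₀ (n := M + 1) (not_lt.1 h)
    rw [hρ0] at this
    have := inv_lt_one_of_one_lt₀ hτ1
    linarith
  obtain ⟨ρ, hρh, hρ1, hρτ⟩ : ∃ ρ : ℝ, 1 / 2 ≤ ρ ∧ ρ < 1 ∧ 1 < ρ ^ M * τ := by
    refine ⟨max (1 / 2) ρ0, le_max_left _ _, max_lt (by norm_num) hρ01, ?_⟩
    have h1 : ρ0 ^ M ≤ (max (1 / 2) ρ0) ^ M := pow_le_pow_left₀ hρ00.le (le_max_right _ _) M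
    have h2 : ρ0 ^ (M + 1) < ρ0 ^ M := pow_lt_pow_right_of_lt_one₀ hρ00 hρ01 (Nat.lt_succ_self M)
    rw [hρ0] at h2
    calc (1 : ℝ) = τ⁻¹ * τ := (inv_mul_cancel₀ hτ0.ne').symm
      _ < _ := mul_lt_mul_of_pos_right (h2.trans_le h1) hτ0
  have hρ0' : 0 < ρ := by linarith
  set ξ := ρ / μ with hξ
  have hξ0 : 0 < ξ := by positivity
  have hξl : ξ < 1 / μ := div_lt_div_of_pos_right hρ1 hμ0
  have hξ1 : ξ ≤ 1 := hξl.le.trans (by rw [div_le_one hμ0]; exact hμ)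
  have hξh : 1 / (2 * μ) ≤ ξ := by
    rw [hξ, ← div_div]; exact div_le_div_of_nonneg_right hρh hμ0.le
  have hξμ : ξ * μ = ρ := by rw [hξ]; field_simp
  obtain ⟨C, hC⟩ := hL ξ hξ0 hξl
  have hθ : 1 + θ0 ≤ 1 + ξ ^ (2 * l) * (2 * KK hlf M x)⁻¹ := by
    have : (1 / (2 * μ)) ^ (2 * l) ≤ ξ ^ (2 * l) := pow_le_pow_left₀ (by positivity) hξh _
    have := mul_le_mul_of_nonneg_right this (by positivity : 0 ≤ (2 * KK hlf M x)⁻¹)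
    linarith
  have key : ∀ Q : ℕ, 1 ≤ Q → (1 - u) * (ρ ^ M * τ) ^ Q ≤ 2 * C := by
    intro Q hQ
    set g : List X → ℕ := fun t => (pc M Q t).countP (fun p => decide (Good H l k p)) with hg
    have hI : ∀ t, ∃ I : Finset (List X), t ∈ SS hlf l (k + 1) (Q * M) x →
        (∀ p ∈ I, p ∈ pc M Q t ∧ Good H l k p) ∧
        (∀ p ∈ I, ∀ q ∈ I, p ≠ q → Disjoint (cy H l k p) (cy H l k q)) ∧
        g t ≤ I.card * β := by
      intro t
      by_cases ht : t ∈ SS hlf l (k + 1) (Q * M) x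
      · have ht' := mem_SS.1 ht
        obtain ⟨I, hI⟩ := indep hlf hl htr k M Q hM x t ht'.1.1 ht'.2.1
        exact ⟨I, fun _ => hI⟩
      · exact ⟨∅, fun h => absurd h ht⟩
    choose I hI using hI
    have hmain := main_ineq hlf hl htr k M Q hM x x ξ hξ0 hξ1 I
      (fun t ht => ⟨(hI t ht).1, (hI t ht).2.1⟩)
    have hws := weight_sum hlf htr l k M Q x x (u ^ e) (by positivity)
    set B := (SS hlf l (k + 1) (Q * M) x).filter (fun t => e * g t < Q) with hB
    set D := (SS hlf l (k + 1) (Q * M) x).filter (fun t => ¬ e * g t < Q) with hD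
    have hBcard : (B.card : ℝ) * u ^ Q ≤ (u ^ 2 * μ ^ M) ^ Q := by
      calc (B.card : ℝ) * u ^ Q = ∑ t ∈ B, u ^ Q := by simp
        _ ≤ ∑ t ∈ B, (u ^ e) ^ g t := by
            refine Finset.sum_le_sum fun t ht => ?_
            rw [← pow_mul]
            exact pow_le_pow_of_le_one hu0.le hu1.le (Finset.mem_filter.1 ht).2.le
        _ ≤ ∑ t ∈ SS hlf l (k + 1) (Q * M) x, (u ^ e) ^ g t :=
            Finset.sum_le_sum_of_subset_of_nonneg (Finset.filter_subset _ _)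
              (fun _ _ _ => by positivity)
        _ ≤ _ := hws
        _ ≤ _ := pow_le_pow_left₀ (by positivity) he Q
    have hB2 : (B.card : ℝ) ≤ u * μ ^ (Q * M) := by
      have huQ : 0 < u ^ Q := by positivity
      have e1 : (u ^ 2 * μ ^ M) ^ Q = u ^ Q * μ ^ (Q * M) * u ^ Q := by
        rw [mul_pow, ← pow_mul, ← pow_mul, mul_comm M Q, mul_comm 2 Q, pow_mul]; ring
      rw [e1] at hBcard
      have h1 := le_of_mul_le_mul_right hBcard huQ
      have h2 : u ^ Q ≤ u := by
        simpa using pow_le_pow_of_le_one hu0.le hu1.le hQ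
      exact h1.trans (mul_le_mul_of_nonneg_right h2 (by positivity))
    have hBD : (B.card : ℝ) + D.card = ((SS hlf l (k + 1) (Q * M) x).card : ℝ) := by
      exact_mod_cast Finset.card_filter_add_card_filter_not (s := SS hlf l (k + 1) (Q * M) x)
        (fun t => e * g t < Q)
    have hPQ := hP (Q * M) (Nat.mul_pos hQ hM)
    have hDc : (1 - u) * μ ^ (Q * M) ≤ D.card := by linarith
    have hfin : (D.card : ℝ) * (ξ ^ (Q * M) * τ ^ Q) ≤ 2 * C := by
      refine le_trans ?_ (hmain.trans (mul_le_mul_of_nonneg_left (hC _) (by norm_num)))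
      calc (D.card : ℝ) * (ξ ^ (Q * M) * τ ^ Q) = ∑ t ∈ D, ξ ^ (Q * M) * τ ^ Q := by simp
        _ ≤ ∑ t ∈ D, ξ ^ (Q * M) * (1 + ξ ^ (2 * l) * (2 * KK hlf M x)⁻¹) ^ (I t).card := by
            refine Finset.sum_le_sum fun t ht => mul_le_mul_of_nonneg_left ?_ (by positivity)
            rw [hD, Finset.mem_filter] at ht
            have h1 := (hI t ht.1).2.2
            have h2 : Q ≤ e * β * (I t).card := by
              calc Q ≤ e * g t := not_lt.1 ht.2
                _ ≤ e * ((I t).card * β) := Nat.mul_le_mul_left _ h1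
                _ = _ := by ring
            calc τ ^ Q ≤ τ ^ (e * β * (I t).card) := pow_le_pow_right₀ hτ1.le h2
              _ = (τ ^ (e * β)) ^ (I t).card := by rw [pow_mul]
              _ ≤ _ := pow_le_pow_left₀ (by positivity) (hτn.trans hθ) _
        _ ≤ _ := Finset.sum_le_sum_of_subset_of_nonneg (Finset.filter_subset _ _)
              (fun _ _ _ => by positivity)
    refine le_trans ?_ hfin
    calc (1 - u) * (ρ ^ M * τ) ^ Q = (1 - u) * μ ^ (Q * M) * (ξ ^ (Q * M) * τ ^ Q) := by
          rw [← hξμ, mul_pow, mul_pow, mul_pow, ← pow_mul, ← pow_mul, mul_comm M Q]; ring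
      _ ≤ _ := mul_le_mul_of_nonneg_right hDc (by positivity)
  have h1u : 0 < 1 - u := by linarith
  obtain ⟨n, hn⟩ := pow_unbounded_of_one_lt (2 * C / (1 - u)) hρτ
  have h1 := key (n + 1) (by omega)
  have h2 : (ρ ^ M * τ) ^ n ≤ (ρ ^ M * τ) ^ (n + 1) := pow_le_pow_right₀ hρτ.le (Nat.le_succ _)
  rw [div_lt_iff₀ h1u] at hn
  nlinarith

end QG
namespace QG
open Classical
variable {X : Type*}

theorem walk_of {G : SimpleGraph X} (v : X) (t : List X) (h : (v :: t).IsChain G.Adj) :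
    ∃ (w : X) (p : G.Walk v w), p.support = v :: t := by
  induction t generalizing v with
  | nil => exact ⟨v, .nil, by simp⟩
  | cons a t ih =>
    rw [List.isChain_cons_cons] at h
    obtain ⟨w, p, hp⟩ := ih a h.2
    exact ⟨w, .cons h.1 p, by simp [hp]⟩

noncomputable def sawL {G : SimpleGraph X} (hlf : ∀ x, (G.neighborSet x).Finite) (n : ℕ) (v : X) :
    Finset (List X) := (wl hlf n v).filter (fun t => (v :: t).Nodup)

theorem mem_sawL {G : SimpleGraph X} {hlf : ∀ x, (G.neighborSet x).Finite} {n : ℕ} {v : X}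
    {t : List X} : t ∈ sawL hlf n v ↔
      (t.length = n ∧ (v :: t).IsChain G.Adj) ∧ (v :: t).Nodup := by
  simp only [sawL, Finset.mem_filter, mem_wl]

theorem walk_mem {G : SimpleGraph X} {hlf : ∀ x, (G.neighborSet x).Finite} {v w : X}
    (p : G.Walk v w) (hp : p.IsPath) : p.support.tail ∈ sawL hlf p.length v := by
  rw [mem_sawL, SimpleGraph.Walk.cons_tail_support]
  exact ⟨⟨by simp, p.isChain_adj_support⟩, hp.support_nodup⟩

theorem saw_eq {G : SimpleGraph X} (hlf : ∀ x, (G.neighborSet x).Finite) (n : ℕ) (v : X) :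
    sawCount G v n = (sawL hlf n v).card := by
  have e : (sawL hlf n v).card = Nat.card {t // t ∈ sawL hlf n v} := by simp
  rw [e, sawCount]
  refine Nat.card_eq_of_bijective
    (fun p => ⟨p.1.2.support.tail, by
      have := walk_mem (hlf := hlf) p.1.2 p.2.1
      rwa [p.2.2] at this⟩) ⟨?_, ?_⟩
  · rintro ⟨⟨w, p⟩, hp, hpn⟩ ⟨⟨w', p'⟩, hp', hpn'⟩ h
    simp only [Subtype.mk.injEq] at h
    have h1 : p.support = p'.support := by
      rw [← p.cons_tail_support, ← p'.cons_tail_support, h]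
    have h2 : w = w' := by
      rw [← p.getLast_support, ← p'.getLast_support]
      simp only [h1]
    subst h2
    have h3 := SimpleGraph.Walk.ext_support h1
    subst h3
    rfl
  · rintro ⟨t, ht⟩
    rw [mem_sawL] at ht
    obtain ⟨w, p, hp⟩ := walk_of v t ht.1.2
    refine ⟨⟨⟨w, p⟩, ?_, ?_⟩, ?_⟩
    · rw [SimpleGraph.Walk.isPath_def, hp]; exact ht.2
    · have := p.length_support
      simp only [hp, List.length_cons, ht.1.1] at this
      simp only
      omega
    · simp [hp]

theorem vis_le {H : SimpleGraph X} {l : ℕ} (hl : 0 < l) {f : ℕ → X} (hf : Cyc H l f) {t : List X}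
    (ht : t.Nodup) : vis f t ≤ l := by
  rw [vis, List.countP_eq_length_filter, ← List.toFinset_card_of_nodup (ht.filter _)]
  calc _ ≤ ((Finset.range l).image f).card := by
        refine Finset.card_le_card fun y hy => ?_
        simp only [List.toFinset_filter, Finset.mem_filter, decide_eq_true_eq] at hy
        obtain ⟨r, hr, rfl⟩ := hf.mem_range hl hy.2
        exact Finset.mem_image.2 ⟨r, Finset.mem_range.2 hr, rfl⟩
    _ ≤ l := Finset.card_image_le.trans (by simp)

theorem saw_le {H : SimpleGraph X} (hlf : ∀ x, (H.neighborSet x).Finite) {l : ℕ} (hl : 0 < l)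
    (n : ℕ) (x : X) : sawCount H x n ≤ (SS hlf l l n x).card := by
  rw [saw_eq hlf]
  refine Finset.card_le_card fun t ht => ?_
  rw [mem_sawL] at ht
  rw [mem_SS]
  have := (List.nodup_cons.1 ht.2).2
  exact ⟨ht.1, this, fun f hf => vis_le hl hf this⟩

theorem no_cyc {G : SimpleGraph X} {l : ℕ} (hl : 3 ≤ l)
    (hno : ∀ (u : X) (cyc : G.Walk u u), cyc.IsCycle → cyc.length ≠ l)
    (w : List X) (hw : w.IsChain G.Adj)
    (hd : ∀ i j (hj : j < w.length) (hi : i < j), w[i] = w[j] → j = i + l) : w.Nodup := by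
  rw [List.nodup_iff_getElem?_ne_getElem?]
  intro i j hij hj e
  rw [List.getElem?_eq_getElem hj, List.getElem?_eq_getElem (hij.trans hj), Option.some.injEq] at e
  have hjl := hd i j hj hij e
  subst hjl
  set ls := (w.drop i).take l with hc
  have hcl : ls.length = l := by simp [hc]; omega
  have hcc : ls.IsChain G.Adj := (hw.drop i).take l
  have hcg : ∀ m (hm : m < l), ls[m] = w[i + m] := by
    intro m hm; simp [hc]
  have hcn : ls.Nodup := by
    rw [List.nodup_iff_getElem?_ne_getElem?]
    intro a b hab hb
    rw [List.getElem?_eq_getElem hb, List.getElem?_eq_getElem (hab.trans hb), ne_eq,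
      Option.some.injEq, hcg a (by omega), hcg b (by omega)]
    intro e'
    have := hd (i + a) (i + b) (by omega) (by omega) e'
    omega
  obtain ⟨u, r, hur⟩ : ∃ u r, ls = u :: r := by
    cases hc' : ls with
    | nil => rw [hc'] at hcl; simp at hcl; omega
    | cons u r => exact ⟨u, r, rfl⟩
  have hu : u = w[i] := by
    have := hcg 0 (by omega)
    simpa [hur] using this
  obtain ⟨z, p, hp⟩ := walk_of u r (hur ▸ hcc)
  rw [← hur] at hp
  have hpl : p.length = l - 1 := by
    have := p.length_support
    rw [hp] at this; omega
  have hz : z = w[i + (l - 1)] := by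
    have h1 := p.getLast_support
    rw [List.getLast_eq_getElem] at h1
    refine h1.symm.trans ((?_ : _ = ls[l - 1]'(by omega)).trans (hcg (l - 1) (by omega)))
    simp [hp, hcl]
  have hadj : G.Adj z u := by
    have hu2 := hu.trans e
    clear hu
    have := List.isChain_iff_getElem.1 hw (i + (l - 1)) (by omega)
    have e3 : w[i + (l - 1) + 1] = w[i + l] := by congr 1; omega
    rw [e3] at this
    exact (congrArg₂ G.Adj hz hu2).mpr this
  have hpath : p.IsPath := by rw [SimpleGraph.Walk.isPath_def, hp]; exact hcn
  refine hno z (SimpleGraph.Walk.cons hadj p) ?_ (by simp [hpl]; omega)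
  rw [SimpleGraph.Walk.cons_isCycle_iff]
  refine ⟨hpath, fun hmem => ?_⟩
  rw [Sym2.eq_swap] at hmem
  have := hpath.length_eq_one_of_mem_edges hmem
  omega

theorem lift_list {V : Type*} {G : SimpleGraph V} {H : SimpleGraph X} (π : V → X)
    (hlift : ∀ u z, H.Adj (π u) z → ∃ u', G.Adj u u' ∧ π u' = z) (v : V) (t : List X)
    (h : (π v :: t).IsChain H.Adj) : ∃ t' : List V, (v :: t').IsChain G.Adj ∧ t'.map π = t := by
  induction t generalizing v with
  | nil => exact ⟨[], by simp, rfl⟩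
  | cons a t ih =>
    rw [List.isChain_cons_cons] at h
    obtain ⟨u, hu, rfl⟩ := hlift v a h.1
    obtain ⟨t', h1, h2⟩ := ih u h.2
    exact ⟨u :: t', List.isChain_cons_cons.2 ⟨hu, h1⟩, by simp [h2]⟩

theorem LS.map {l : ℕ} {t : List X} (h : LS l t) {φ : X → X} (hφ : Function.Injective φ) :
    LS l (t.map φ) := by
  intro i j hj hi e
  simp only [List.length_map] at hj
  simp only [List.getElem_map] at e
  exact h i j hj hi (hφ e)

theorem Lc_le {V : Type*} {G : SimpleGraph V} {H : SimpleGraph X} (π : V → X)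
    (hlift : ∀ u z, H.Adj (π u) z → ∃ u', G.Adj u u' ∧ π u' = z)
    (hlfG : ∀ x, (G.neighborSet x).Finite) (hlf : ∀ x, (H.neighborSet x).Finite)
    (htr : ∀ x y : X, ∃ φ : H ≃g H, φ x = y) {l : ℕ} (hl : 3 ≤ l)
    (hno : ∀ (u : V) (cyc : G.Walk u u), cyc.IsCycle → cyc.length ≠ l) (v : V) (x : X) (n : ℕ) :
    (Lc hlf l (n + 1) x).card ≤ (hlf x).toFinset.card * sawCount G v n := by
  rw [saw_eq hlfG, ← Finset.card_product]
  choose Φ hΦ using fun y => htr y (π v)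
  have hex : ∀ t : List X, ∃ r : X × List V, t ∈ Lc hlf l (n + 1) x →
      r ∈ (hlf x).toFinset ×ˢ sawL hlfG n v ∧ ∃ t'', t = r.1 :: t'' ∧
        r.2.map π = t''.map (Φ r.1) := by
    intro t
    by_cases ht : t ∈ Lc hlf l (n + 1) x
    · rw [Lc, Finset.mem_filter, mem_wl] at ht
      obtain ⟨⟨h1, h2⟩, h3⟩ := ht
      cases t with
      | nil => simp at h1
      | cons y t =>
        rw [List.isChain_cons_cons] at h2
        have h4 := chain_map (Φ y) h2.2
        have h5 := h3.map (Φ y).injective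
        rw [List.map_cons, hΦ] at h4 h5
        obtain ⟨t', ha, hb⟩ := lift_list π hlift v _ h4
        refine ⟨(y, t'), fun _ => ⟨Finset.mem_product.2 ⟨by simpa using h2.1, ?_⟩, t, rfl, hb⟩⟩
        rw [mem_sawL]
        refine ⟨⟨?_, ha⟩, no_cyc hl hno _ ha ?_⟩
        · have := congrArg List.length hb
          simp only [List.length_map, List.length_cons] at this h1
          simp only; omega
        · intro i j hj hi e
          have h6 : (v :: t').map π = π v :: t.map (Φ y) := by rw [List.map_cons, hb]
          rw [← h6] at h5
          refine h5 i j (by simpa using hj) hi ?_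
          rw [List.getElem_map, List.getElem_map, e]
    · exact ⟨(x, []), fun h => absurd h ht⟩
  choose R hR using hex
  refine Finset.card_le_card_of_injOn R (fun t ht => (hR t ht).1) ?_
  intro t ht t' ht' e
  obtain ⟨-, s, h1, h2⟩ := hR t ht
  obtain ⟨-, s', h1', h2'⟩ := hR t' ht'
  rw [e] at h1 h2
  refine h1.trans (Eq.trans ?_ h1'.symm)
  congr 1
  exact List.map_injective_iff.2 (Φ _).injective (h2.symm.trans h2')

theorem saw_pos {G : SimpleGraph X} [Infinite X] (hconn : G.Connected)
    (hlf : ∀ x, (G.neighborSet x).Finite) (n : ℕ) (v : X) : 1 ≤ sawCount G v n := by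
  rw [saw_eq hlf, Nat.one_le_iff_ne_zero, ← Nat.pos_iff_ne_zero, Finset.card_pos]
  by_contra hcon
  rw [Finset.not_nonempty_iff_eq_empty] at hcon
  have : (⋃ r ∈ Set.Iio n, (fun t => en v t) '' (wl hlf r v : Set (List X))).Finite :=
    (Set.finite_Iio n).biUnion fun r _ => (Finset.finite_toSet _).image _
  refine Set.infinite_univ (α := X) (this.subset ?_)
  intro w _
  obtain ⟨p, hp⟩ := hconn.exists_isPath v w
  have hmem := mem_sawL.1 (walk_mem (hlf := hlf) p hp)
  have hlt : p.length < n := by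
    by_contra hge
    have : p.support.tail.take n ∈ sawL hlf n v := by
      rw [mem_sawL]
      have e : v :: p.support.tail.take n = (v :: p.support.tail).take (n + 1) := rfl
      rw [e]
      refine ⟨⟨?_, hmem.1.2.take _⟩, hmem.2.sublist (List.take_sublist _ _)⟩
      rw [List.length_take, hmem.1.1]; omega
    rw [hcon] at this
    simp at this
  simp only [Set.mem_iUnion, Set.mem_image]
  refine ⟨p.length, hlt, p.support.tail, mem_wl.2 hmem.1, ?_⟩
  have h1 := p.getLast_support
  have h2 := p.cons_tail_support
  generalize p.support.tail = s at h2 ⊢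
  simp only [← h2] at h1
  rw [← h1, en]
  cases s <;> simp [List.getLast_cons, List.getLast_eq_getLastD, List.getLast?_cons]

theorem cyc_of {H : SimpleGraph X} {x : X} (p : H.Walk x x) (hp : p.IsCycle) :
    ∃ f, Cyc H p.length f := by
  have h3 := hp.three_le_length
  have hinj := hp.getVert_injOn'
  have h0 : p.getVert p.length = p.getVert 0 := by simp
  refine ⟨fun i => p.getVert (i % p.length), fun i => by simp, fun i => ?_, fun i j hi hj e => ?_⟩
  · have hm : i % p.length < p.length := Nat.mod_lt _ (by omega)
    have h1 := p.adj_getVert_succ hm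
    have : p.getVert ((i + 1) % p.length) = p.getVert (i % p.length + 1) := by
      rw [Nat.add_mod, Nat.mod_eq_of_lt (by omega : 1 < p.length)]
      rcases (by omega : i % p.length + 1 < p.length ∨ i % p.length + 1 = p.length) with h | h
      · rw [Nat.mod_eq_of_lt h]
      · rw [h, h0, Nat.mod_self]
    rw [← this] at h1; exact h1
  · have hmi : i % p.length < p.length := Nat.mod_lt _ (by omega)
    have hmj : j % p.length < p.length := Nat.mod_lt _ (by omega)
    have := hinj (by simp; omega) (by simp; omega) e
    have h5 : i ≡ j [MOD p.length] := this
    have := (Nat.modEq_iff_dvd' hi.le).1 h5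
    have := Nat.le_of_dvd (by omega) this
    omega

end QG
namespace QG
open Classical
variable {X : Type*}

theorem bdd_of_ev {f : ℕ → ℝ} (h : ∀ᶠ n in atTop, f n ≤ 1) : ∃ C : ℝ, 1 ≤ C ∧ ∀ n, f n ≤ C := by
  obtain ⟨N, hN⟩ := eventually_atTop.1 h
  refine ⟨1 + ∑ i ∈ Finset.range N, |f i|, ?_, fun n => ?_⟩
  · have : 0 ≤ ∑ i ∈ Finset.range N, |f i| := Finset.sum_nonneg fun _ _ => abs_nonneg _
    linarith
  · by_cases hn : n < N
    · have := Finset.single_le_sum (f := fun i => |f i|) (fun i _ => abs_nonneg _)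
        (Finset.mem_range.2 hn)
      have h2 := le_abs_self (f n)
      linarith
    · have := hN n (not_lt.1 hn)
      have h0 : 0 ≤ ∑ i ∈ Finset.range N, |f i| := Finset.sum_nonneg fun _ _ => abs_nonneg _
      linarith

theorem geo_bound {σ : ℕ → ℕ} {μ ν : ℝ} (hμν : μ < ν) (hν : 0 < ν)
    (hμ : Tendsto (fun n : ℕ => (σ n : ℝ) ^ ((1 : ℝ) / n)) atTop (nhds μ)) :
    ∃ C : ℝ, 1 ≤ C ∧ ∀ n, (σ n : ℝ) ≤ C * ν ^ n := by
  have h : ∀ᶠ n in atTop, (σ n : ℝ) / ν ^ n ≤ 1 := by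
    filter_upwards [hμ.eventually (gt_mem_nhds hμν), eventually_ge_atTop 1] with n hn h1
    rw [div_le_one (by positivity)]
    have h2 := pow_le_pow_left₀ (by positivity) hn.le n
    rwa [one_div, Real.rpow_inv_natCast_pow (by positivity) (by omega)] at h2
  obtain ⟨C, hC1, hC⟩ := bdd_of_ev h
  refine ⟨C, hC1, fun n => ?_⟩
  have := hC n
  rwa [div_le_iff₀ (by positivity)] at this

theorem all_k {H : SimpleGraph X} (hlf : ∀ x, (H.neighborSet x).Finite) {l : ℕ} (hl : 0 < l)
    (htr : ∀ x y : X, ∃ φ : H ≃g H, φ x = y) (hcyc : ∃ f, Cyc H l f) (x : X) (μ : ℝ) (hμ : 1 ≤ μ)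
    (hL : ∀ ξ : ℝ, 0 < ξ → ξ < 1 / μ → ∃ C : ℝ, ∀ N : ℕ,
      ∑ n ∈ Finset.range N, ((Lc hlf l n x).card : ℝ) * ξ ^ n ≤ C) (k : ℕ) :
    ∃ M : ℕ, 0 < M ∧ ((SS hlf l k M x).card : ℝ) < μ ^ M := by
  induction k with
  | zero =>
    refine ⟨1, one_pos, ?_⟩
    have : SS hlf l 0 1 x = ∅ := by
      rw [Finset.eq_empty_iff_forall_notMem]
      intro t ht
      rw [mem_SS] at ht
      obtain ⟨f, hf⟩ := hcyc
      obtain ⟨y, hy⟩ := List.exists_mem_of_length_pos (by omega : 0 < t.length)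
      obtain ⟨φ, hφ⟩ := htr (f 0) y
      have h1 := ht.2.2 _ (hf.map φ)
      have h2 : 0 < vis (fun i => φ (f i)) t := vis_pos.2 ⟨y, hy, ⟨0, hφ⟩⟩
      omega
    rw [this]; simp; linarith
  | succ k ih =>
    by_contra hcon
    push Not at hcon
    obtain ⟨M, hM, hb⟩ := ih
    exact contra hlf hl htr k M hM x μ hμ hb (fun m hm => hcon m hm) hL

theorem growth {s : ℕ → ℕ} (hs : ∀ m n, s (m + n) ≤ s m * s n) {M : ℕ} (hM : 0 < M) {μ : ℝ}
    (hμ : 0 < μ) (h : (s M : ℝ) < μ ^ M) :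
    ∃ a C : ℝ, 0 < a ∧ a < μ ∧ 0 < C ∧ ∀ n, (s n : ℝ) ≤ C * a ^ n := by
  obtain ⟨M, rfl⟩ : ∃ M', M = M' + 1 := ⟨M - 1, by omega⟩
  have hμM : 0 < μ ^ (M + 1) := by positivity
  have hs0 : (0 : ℝ) ≤ s (M + 1) := by positivity
  obtain ⟨a, ha, he⟩ := exists_root ((s (M + 1) + μ ^ (M + 1)) / 2) (by linarith) M
  have hsa : (s (M + 1) : ℝ) ≤ a ^ (M + 1) := by rw [he]; linarith
  have haμ : a < μ := by
    by_contra hc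
    have := pow_le_pow_left₀ hμ.le (not_lt.1 hc) (M + 1)
    linarith
  set C : ℝ := 1 + ∑ i ∈ Finset.range (M + 1), (s i : ℝ) / a ^ i with hC
  have hsum : 0 ≤ ∑ i ∈ Finset.range (M + 1), (s i : ℝ) / a ^ i :=
    Finset.sum_nonneg fun _ _ => by positivity
  refine ⟨a, C, ha, haμ, by linarith, ?_⟩
  intro n
  induction n using Nat.strong_induction_on with
  | _ n ih =>
    by_cases hn : n < M + 1
    · have := Finset.single_le_sum (f := fun i => (s i : ℝ) / a ^ i) (fun i _ => by positivity)
        (Finset.mem_range.2 hn)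
      rw [← div_le_iff₀ (by positivity)]
      linarith
    · obtain ⟨m, rfl⟩ : ∃ m, n = (M + 1) + m := ⟨n - (M + 1), by omega⟩
      have h1 := ih m (by omega)
      have h2 : (s (M + 1 + m) : ℝ) ≤ s (M + 1) * s m := by exact_mod_cast hs (M + 1) m
      calc (s (M + 1 + m) : ℝ) ≤ s (M + 1) * s m := h2
        _ ≤ a ^ (M + 1) * (C * a ^ m) := by gcongr
        _ = _ := by rw [pow_add]; ring

theorem limsup_lt {σ : ℕ → ℕ} {a C μ : ℝ} (ha : 0 < a) (haμ : a < μ) (hC : 0 < C)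
    (h : ∀ n, (σ n : ℝ) ≤ C * a ^ n) :
    limsup (fun n : ℕ => (σ n : ℝ) ^ ((1 : ℝ) / n)) atTop < μ := by
  refine lt_of_le_of_lt ?_ haμ
  have ht : Tendsto (fun n : ℕ => C ^ ((1 : ℝ) / n) * a) atTop (nhds a) := by
    have h1 : Tendsto (fun n : ℕ => C ^ ((1 : ℝ) / n)) atTop (nhds (C ^ (0 : ℝ))) :=
      (Real.continuousAt_const_rpow hC.ne').tendsto.comp tendsto_one_div_atTop_nhds_zero_nat
    rw [Real.rpow_zero] at h1
    simpa using h1.mul_const a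
  rw [← ht.limsup_eq]
  refine limsup_le_limsup ?_ ?_ ht.isBoundedUnder_le
  · filter_upwards [eventually_ge_atTop 1] with n hn
    calc (σ n : ℝ) ^ ((1 : ℝ) / n) ≤ (C * a ^ n) ^ ((1 : ℝ) / n) :=
          Real.rpow_le_rpow (by positivity) (h n) (by positivity)
      _ = _ := by
          rw [Real.mul_rpow hC.le (by positivity), one_div,
            Real.pow_rpow_inv_natCast ha.le (by omega)]
  · exact IsBoundedUnder.isCoboundedUnder_le
      (isBoundedUnder_of ⟨0, fun n => by positivity⟩)

theorem Lc_sum {V : Type*} {G : SimpleGraph V} {H : SimpleGraph X} (π : V → X)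
    (hlift : ∀ u z, H.Adj (π u) z → ∃ u', G.Adj u u' ∧ π u' = z)
    (hlfG : ∀ x, (G.neighborSet x).Finite) (hlf : ∀ x, (H.neighborSet x).Finite)
    (htr : ∀ x y : X, ∃ φ : H ≃g H, φ x = y) {l : ℕ} (hl : 3 ≤ l)
    (hno : ∀ (u : V) (cyc : G.Walk u u), cyc.IsCycle → cyc.length ≠ l) (v : V) (x : X)
    (μ : ℝ) (hμ0 : 1 ≤ μ)
    (hμ : Tendsto (fun n : ℕ => (sawCount G v n : ℝ) ^ ((1 : ℝ) / n)) atTop (nhds μ))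
    (ξ : ℝ) (hξ : 0 < ξ) (hξμ : ξ < 1 / μ) : ∃ C : ℝ, ∀ N : ℕ,
      ∑ n ∈ Finset.range N, ((Lc hlf l n x).card : ℝ) * ξ ^ n ≤ C := by
  have hm : μ < 1 / ξ := (lt_one_div hξ (by linarith)).1 hξμ
  obtain ⟨ν, h1, h2⟩ := exists_between hm
  have hν : 0 < ν := by linarith
  obtain ⟨C, hC1, hC⟩ := geo_bound h1 hν hμ
  have hq : ν * ξ < 1 := by rwa [lt_div_iff₀ hξ] at h2
  have hq0 : 0 ≤ ν * ξ := by positivity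
  set d : ℝ := ((hlf x).toFinset.card : ℝ) with hd
  have hd0 : 0 ≤ d := by positivity
  refine ⟨((Lc hlf l 0 x).card : ℝ) + d * C * ξ * (1 - ν * ξ)⁻¹, fun N => ?_⟩
  calc ∑ n ∈ Finset.range N, ((Lc hlf l n x).card : ℝ) * ξ ^ n
      ≤ ∑ n ∈ Finset.range (N + 1), ((Lc hlf l n x).card : ℝ) * ξ ^ n :=
        Finset.sum_le_sum_of_subset_of_nonneg (Finset.range_mono (Nat.le_succ _))
          (fun _ _ _ => by positivity)
    _ = ∑ n ∈ Finset.range N, ((Lc hlf l (n + 1) x).card : ℝ) * ξ ^ (n + 1) +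
        ((Lc hlf l 0 x).card : ℝ) := by rw [Finset.sum_range_succ']; simp
    _ ≤ ∑ n ∈ Finset.range N, d * C * ξ * (ν * ξ) ^ n + ((Lc hlf l 0 x).card : ℝ) := by
        refine add_le_add (Finset.sum_le_sum fun n hn => ?_) le_rfl
        have h3 : ((Lc hlf l (n + 1) x).card : ℝ) ≤ d * sawCount G v n := by
          rw [hd]; exact_mod_cast Lc_le π hlift hlfG hlf htr hl hno v x n
        calc ((Lc hlf l (n + 1) x).card : ℝ) * ξ ^ (n + 1)
            ≤ (d * (C * ν ^ n)) * ξ ^ (n + 1) := by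
              refine mul_le_mul_of_nonneg_right (h3.trans ?_) (by positivity)
              exact mul_le_mul_of_nonneg_left (hC n) hd0
          _ = _ := by rw [mul_pow, pow_succ]; ring
    _ ≤ _ := by
        rw [← Finset.mul_sum, add_comm]
        gcongr
        rw [← tsum_geometric_of_lt_one hq0 hq]
        exact (summable_geometric_of_lt_one hq0 hq).sum_le_tsum _ (fun _ _ => by positivity)

theorem quot_lift {V : Type*} (G : SimpleGraph V) (Γ A : Subgroup (Equiv.Perm V))
    (hΓaut : ∀ γ ∈ Γ, ∀ u w : V, G.Adj (γ u) (γ w) ↔ G.Adj u w) (hAΓ : A ≤ Γ)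
    (u : V) (z : Quotient (MulAction.orbitRel A V))
    (h : (quotGraph G A).Adj (Quotient.mk (MulAction.orbitRel A V) u) z) :
    ∃ u', G.Adj u u' ∧ Quotient.mk (MulAction.orbitRel A V) u' = z := by
  have key : ∀ u1 w1 : V, G.Adj u1 w1 → Quotient.mk (MulAction.orbitRel A V) u1 =
      Quotient.mk (MulAction.orbitRel A V) u → Quotient.mk (MulAction.orbitRel A V) w1 = z →
      ∃ u', G.Adj u u' ∧ Quotient.mk (MulAction.orbitRel A V) u' = z := by
    intro u1 w1 hadj e1 e2
    have := Quotient.exact e1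
    obtain ⟨a, ha⟩ : u1 ∈ MulAction.orbit A u := this
    refine ⟨a⁻¹ • w1, ?_, ?_⟩
    · rw [← hΓaut a.1 (hAΓ a.2)]
      have e3 : a.1 u = u1 := ha
      have e4 : a.1 (a⁻¹ • w1) = w1 := smul_inv_smul a w1
      rw [e3, e4]; exact hadj
    · rw [← e2]
      exact Quotient.sound (MulAction.mem_orbit w1 a⁻¹)
  rw [quotGraph, SimpleGraph.fromRel_adj] at h
  rcases h.2 with ⟨u1, w1, h1, h2, h3⟩ | ⟨u1, w1, h1, h2, h3⟩
  · exact key u1 w1 h1 h2 h3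
  · exact key w1 u1 h1.symm h3 h2

theorem final {V : Type*} {G : SimpleGraph V} {H : SimpleGraph X} [Infinite V] (hconn : G.Connected)
    (π : V → X) (hπ : Function.Surjective π)
    (hlift : ∀ u z, H.Adj (π u) z → ∃ u', G.Adj u u' ∧ π u' = z)
    (hlfG : ∀ x, (G.neighborSet x).Finite)
    (htr : ∀ x y : X, ∃ φ : H ≃g H, φ x = y) {l : ℕ} (hl : 3 ≤ l) (hcyc : ∃ f, Cyc H l f)
    (hno : ∀ (u : V) (cyc : G.Walk u u), cyc.IsCycle → cyc.length ≠ l) (v : V)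
    (μ : ℝ)
    (hμ : Tendsto (fun n : ℕ => (sawCount G v n : ℝ) ^ ((1 : ℝ) / n)) atTop (nhds μ)) :
    limsup (fun n : ℕ => (sawCount H (π v) n : ℝ) ^ ((1 : ℝ) / n)) atTop < μ := by
  have hlf : ∀ x, (H.neighborSet x).Finite := by
    intro x
    obtain ⟨u, rfl⟩ := hπ x
    refine ((hlfG u).image π).subset ?_
    intro z hz
    obtain ⟨u', h1, h2⟩ := hlift u z hz
    exact ⟨u', h1, h2⟩
  have hμ1 : 1 ≤ μ := by
    refine ge_of_tendsto' hμ fun n => ?_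
    refine Real.one_le_rpow ?_ (by positivity)
    exact_mod_cast saw_pos hconn hlfG n v
  have hl0 : 0 < l := by omega
  obtain ⟨M, hM, hb⟩ := all_k hlf hl0 htr hcyc (π v) μ hμ1
    (Lc_sum π hlift hlfG hlf htr hl hno v (π v) μ hμ1 hμ) l
  obtain ⟨a, C, ha, haμ, hC, hbd⟩ := growth (s := fun n => (SS hlf l l n (π v)).card)
    (fun m n => SS_sub hlf htr l l m n (π v)) hM (by linarith) hb
  refine limsup_lt ha haμ hC fun n => le_trans ?_ (hbd n)
  exact_mod_cast saw_le hlf hl0 n (π v)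

end QG

/-- Strict inequality for quotient graphs by freely-acting (not necessarily normal)
subgroups: if `𝒜` acts freely, `G/𝒜` is vertex-transitive, and `G/𝒜` contains a cycle of
some length `l` that is the length of no cycle of `G`, then the connective constant of
`G/𝒜` is strictly smaller than that of `G`. -/
theorem quotient_graph_free_strict_inequality {V : Type*} (G : SimpleGraph V) [Infinite V]
    (hconn : G.Connected)
    (hlf : ∀ v : V, (G.neighborSet v).Finite)
    (Γ A : Subgroup (Equiv.Perm V))
    (hΓaut : ∀ γ ∈ Γ, ∀ u w : V, G.Adj (γ u) (γ w) ↔ G.Adj u w)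
    (hΓtrans : ∀ u w : V, ∃ γ ∈ Γ, γ u = w)
    (hAΓ : A ≤ Γ)
    (hAnontriv : ∃ α ∈ A, α ≠ 1)
    (hAfree : ∀ α ∈ A, ∀ u : V, α u = u → α = 1)
    (hquotTrans : ∀ x y : Quotient (MulAction.orbitRel A V),
      ∃ γ : quotGraph G A ≃g quotGraph G A, γ x = y)
    (l : ℕ) (hl : 3 ≤ l)
    (hcycleQuot : ∃ (x : Quotient (MulAction.orbitRel A V)) (cyc : (quotGraph G A).Walk x x),
      cyc.IsCycle ∧ cyc.length = l)
    (hnocycleG : ∀ (u : V) (cyc : G.Walk u u), cyc.IsCycle → cyc.length ≠ l)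
    (v : V) (μ : ℝ)
    (hμ : Tendsto (fun n : ℕ => (sawCount G v n : ℝ) ^ ((1 : ℝ) / n)) atTop (nhds μ)) :
    limsup (fun n : ℕ =>
      (sawCount (quotGraph G A) (Quotient.mk (MulAction.orbitRel A V) v) n : ℝ) ^ ((1 : ℝ) / n))
      atTop < μ := by
  obtain ⟨x, cyc, hc, hcl⟩ := hcycleQuot
  have hcyc := QG.cyc_of cyc hc
  rw [hcl] at hcyc
  exact QG.final hconn (Quotient.mk (MulAction.orbitRel A V)) Quotient.mk_surjective
    (QG.quot_lift G Γ A hΓaut hAΓ) hlf hquotTrans hl hcyc hnocycleG v μ hμ
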